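/- Let n ≥ 2, m < n, p = n/m, q ∈ (1, ∞], and α₀ = 1 − 1/q, α_∞ > 1 − 1/q. Then there exists C such that for every u ∈ V^m L^{p,q;[α₀,α_∞]}(ℝⁿ) there is a unique polynomial P of degree ≤ m−1 with ‖u − P‖_{L^{∞,q;[−1/q, α_∞ − 1],[−1,0]}(ℝⁿ)} ≤ C‖∇^m u‖_{L^{p,q;[α₀,α_∞]}(ℝⁿ)}. -/

import Mathlib

/-!
A function on `ℝⁿ` differs from a polynomial of degree less than `m` by at most a constant multiple
of the Riesz potential `I_m |∇^m u|` with kernel `‖x - y‖ ^ (m - n)` (`exists_polynomial_le_rieszP`),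
so the inequality reduces to the boundedness of `I_m` between the two Lorentz–Zygmund spaces
(`rieszP_lz`).

The boundedness rests on O'Neil's inequality (`rearrE_rieszP_le`)
`(I_m F)*(t) ≤ C ∫_0^∞ max(t, s)^(m/n - 1) F*(s) ds`, which follows from the estimate
`∫_S ‖x - y‖ ^ (m - n) dy ≤ C |S| ^ (m/n)` and the layer-cake formula. It leaves a weighted Hardy
inequality on the half-line (`hardy_main`). Its kernel between the two weights is dominated by a sum
of two kernels `ρ(t)^(1/q) exp (-β |X t - X s|) ρ(s)^(1-1/q)` with `ρ = |X'|`, and these are bounded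
on `L^q` for every `q` by Schur's test. The part `s ≤ t` uses `X = log`. The part `t ≤ s` is critical:
there `X` is an iterated logarithm near `0`, which is where the weight `ℓℓ⁻¹` is needed, and
`-log (1 + log t)` near infinity, where the decay is provided by `α_∞ > 1 - 1/q`.

For the pointwise bound, a smooth function on the ball of radius `R` is compared with the average over
the ball of its Taylor polynomials of order `m` (`exists_polynomial_ball`). The constant obtained does
not depend on `R`. Weak derivatives are reached by mollification: the polynomials found for the
mollifications on growing balls are bounded at almost every point, because the potential is locally
integrable, and therefore converge along an ultrafilter to a polynomial of the same degree.

For uniqueness, a function of finite limiting norm has superlevel sets of finite measure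
(`volume_lt_top_of_lzNorm`), because the weight is not in `L^q` at infinity, whereas a nonzero
polynomial exceeds some positive constant on a set of infinite measure (`polynomial_volume_eq_top`).
-/

open MeasureTheory ENNReal Set Filter

noncomputable section

/-- Euclidean space ℝⁿ. -/
abbrev Euc (n : ℕ) := EuclideanSpace ℝ (Fin n)

/-- Nonincreasing rearrangement of an `ℝ≥0∞`-valued function. -/
def rearrE {α : Type*} [MeasurableSpace α] (μ : Measure α) (f : α → ℝ≥0∞) (t : ℝ) : ℝ≥0∞ :=
  sInf {l : ℝ≥0∞ | μ {x | l < f x} ≤ ENNReal.ofReal t}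

/-- Unsigned nonincreasing rearrangement `f*` of a real-valued function. -/
def rearr {α : Type*} [MeasurableSpace α] (μ : Measure α) (f : α → ℝ) (t : ℝ) : ℝ≥0∞ :=
  rearrE μ (fun x => ENNReal.ofReal |f x|) t

/-- `u` is `m`-times weakly differentiable on ℝⁿ, with weak derivatives
`D k a` of order `k ≤ m` in the directions `a : Fin k → Fin n`. -/
def HasWeakDerivs (n m : ℕ) (u : Euc n → ℝ) (D : ∀ k : ℕ, (Fin k → Fin n) → Euc n → ℝ) : Prop :=
  LocallyIntegrable u volume ∧ (∀ a : Fin 0 → Fin n, D 0 a = u) ∧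
    (∀ k (a : Fin k → Fin n), k ≤ m → LocallyIntegrable (D k a) volume) ∧
    ∀ k : ℕ, k ≤ m → ∀ (a : Fin k → Fin n) (φ : Euc n → ℝ),
      ContDiff ℝ (⊤ : ℕ∞) φ → HasCompactSupport φ →
        ∫ x, u x * iteratedFDeriv ℝ k φ x (fun j => EuclideanSpace.single (a j) 1)
          = (-1 : ℝ) ^ k * ∫ x, D k a x * φ x

/-- The ℓ¹-norm `|∇^m u|` of the vector of all `m`-th order weak derivatives. -/
def gradAbs (n m : ℕ) (D : ∀ k : ℕ, (Fin k → Fin n) → Euc n → ℝ) (x : Euc n) : ℝ :=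
  ∑ a : Fin m → Fin n, |D m a x|

/-- broken logarithm ℓ^[a0,ai] -/
def ellA (a0 ai t : ℝ) : ℝ :=
  if t < 1 then (1 - Real.log t) ^ a0 else (1 + Real.log t) ^ ai

/-- doubly broken logarithm ℓℓ^[b0,bi] -/
def ellellB (b0 bi t : ℝ) : ℝ :=
  if t < 1 then (1 + Real.log (1 - Real.log t)) ^ b0 else (1 + Real.log (1 + Real.log t)) ^ bi

/-- Lorentz–Zygmund functional ‖t^{1/p-1/q} ℓ^𝔸(t) ℓℓ^𝔹(t) f*(t)‖_{L^q(0,∞)};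
`pinv` denotes 1/p (so `pinv = 0` corresponds to p = ∞). -/
def lzNorm {α : Type*} [MeasurableSpace α] (μ : Measure α) (pinv : ℝ) (q : ℝ≥0∞)
    (a0 ai b0 bi : ℝ) (f : α → ℝ) : ℝ≥0∞ :=
  if q = ⊤ then
    essSup (fun t => ENNReal.ofReal (t ^ pinv * ellA a0 ai t * ellellB b0 bi t) * rearr μ f t)
      (volume.restrict (Ioi (0 : ℝ)))
  else
    (∫⁻ t in Ioi (0 : ℝ),
        (ENNReal.ofReal (t ^ (pinv - 1 / q.toReal) * ellA a0 ai t * ellellB b0 bi t) *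
            rearr μ f t) ^ q.toReal) ^ (1 / q.toReal)

/-! ### Schur's test for exponential kernels -/

/-- Schur's test: if the kernel `E` has row and column integrals at most `C` with respect to the
density `ρ`, then `G ↦ ρ ^ (1/q) ∫ E ρ ^ (1 - 1/q) G` has norm at most `C` on `L^q`. The powers
of `ρ` are what remains of the isometry between `L^q(ρ dμ)` and `L^q(dμ)`. -/
theorem schur_test {α : Type*} [MeasurableSpace α] {μ : Measure α} [SFinite μ]
    {q : ℝ≥0∞} (hq : 1 < q) {E : α → α → ℝ≥0∞} (hE : Measurable (Function.uncurry E))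
    {ρ : α → ℝ≥0∞} (hρ : Measurable ρ) {C : ℝ≥0∞}
    (h1 : ∀ᵐ t ∂μ, ∫⁻ s, E t s * ρ s ∂μ ≤ C) (h2 : ∀ᵐ s ∂μ, ∫⁻ t, E t s * ρ t ∂μ ≤ C)
    {G : α → ℝ≥0∞} (hG : Measurable G) :
    eLpNorm (fun t => ρ t ^ (1 / q.toReal) * ∫⁻ s, E t s * ρ s ^ (1 - 1 / q.toReal) * G s ∂μ) q μ
      ≤ C * eLpNorm G q μ := by
  have hEt : ∀ t, Measurable (E t) := fun t => hE.comp measurable_prodMk_left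
  by_cases hqt : q = ⊤
  · subst hqt
    have e0 : (1 : ℝ) / (⊤ : ℝ≥0∞).toReal = 0 := by simp
    simp only [e0, ENNReal.rpow_zero, one_mul, sub_zero, ENNReal.rpow_one]
    rw [eLpNorm_exponent_top, eLpNorm_exponent_top]
    refine essSup_le_of_ae_le _ ?_
    filter_upwards [h1] with t ht
    simp only [enorm_eq_self]
    calc ∫⁻ s, E t s * ρ s * G s ∂μ ≤ ∫⁻ s, E t s * ρ s * eLpNormEssSup G μ ∂μ := by
          refine lintegral_mono_ae ?_
          filter_upwards [ae_le_eLpNormEssSup (f := G) (μ := μ)] with s hs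
          gcongr
          exact hs
      _ = (∫⁻ s, E t s * ρ s ∂μ) * eLpNormEssSup G μ := by
          exact lintegral_mul_const _ ((hEt t).mul hρ)
      _ ≤ _ := by gcongr
  · have hq0 : q ≠ 0 := (zero_lt_one.trans hq).ne'
    set r := q.toReal with hr
    have hr1 : 1 < r := by
      rw [hr, ← ENNReal.toReal_one]
      exact (ENNReal.toReal_lt_toReal one_ne_top hqt).2 hq
    have hr0 : 0 < r := by linarith
    have hconj : (r / (r - 1)).HolderConjugate r := (Real.HolderConjugate.conjExponent hr1).symm
    have hinv : 1 / (r / (r - 1)) = 1 - 1 / r := by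
      field_simp
    have hth : 0 ≤ 1 - 1 / r := by
      rw [sub_nonneg, div_le_one hr0]; exact hr1.le
    have hth' : 0 ≤ 1 / r := by positivity
    -- Hölder with exponents `r/(r-1)` and `r`, splitting `E = E ^ (1 - 1/r) * E ^ (1/r)`.
    have key : ∀ᵐ t ∂μ, (ρ t ^ (1 / r) * ∫⁻ s, E t s * ρ s ^ (1 - 1 / r) * G s ∂μ) ^ r
        ≤ C ^ (r - 1) * (∫⁻ s, (E t s * ρ t) * G s ^ r ∂μ) := by
      filter_upwards [h1] with t ht
      have hold := ENNReal.lintegral_mul_le_Lp_mul_Lq μ hconj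
        (f := fun s => (E t s * ρ s) ^ (1 - 1 / r)) (g := fun s => E t s ^ (1 / r) * G s)
        (((hEt t).mul hρ).pow_const _).aemeasurable
        (((hEt t).pow_const _).mul hG).aemeasurable
      have e1 : ∀ s, ((E t s * ρ s) ^ (1 - 1 / r)) ^ (r / (r - 1)) = E t s * ρ s := by
        intro s
        rw [← ENNReal.rpow_mul, ← hinv, one_div_mul_cancel (by
          have : r - 1 ≠ 0 := by linarith
          positivity), ENNReal.rpow_one]
      have e2 : ∀ s, (E t s ^ (1 / r) * G s) ^ r = E t s * G s ^ r := by
        intro s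
        rw [ENNReal.mul_rpow_of_nonneg _ _ hr0.le, ← ENNReal.rpow_mul,
          one_div_mul_cancel hr0.ne', ENNReal.rpow_one]
      have e3 : ∀ s, ((fun s => (E t s * ρ s) ^ (1 - 1 / r)) * fun s => E t s ^ (1 / r) * G s) s
          = E t s * ρ s ^ (1 - 1 / r) * G s := by
        intro s
        simp only [Pi.mul_apply]
        rw [ENNReal.mul_rpow_of_nonneg _ _ hth]
        calc E t s ^ (1 - 1 / r) * ρ s ^ (1 - 1 / r) * (E t s ^ (1 / r) * G s)
            = (E t s ^ (1 - 1 / r) * E t s ^ (1 / r)) * ρ s ^ (1 - 1 / r) * G s := by ring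
          _ = _ := by
            rw [← ENNReal.rpow_add_of_nonneg _ _ hth hth', sub_add_cancel, ENNReal.rpow_one]
      simp only [e1, e2, e3] at hold
      rw [hinv] at hold
      calc (ρ t ^ (1 / r) * ∫⁻ s, E t s * ρ s ^ (1 - 1 / r) * G s ∂μ) ^ r
          ≤ (ρ t ^ (1 / r) * (C ^ (1 - 1 / r) * (∫⁻ s, E t s * G s ^ r ∂μ) ^ (1 / r))) ^ r := by
            gcongr
            refine hold.trans ?_
            gcongr
        _ = C ^ (r - 1) * (ρ t * ∫⁻ s, E t s * G s ^ r ∂μ) := by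
            rw [ENNReal.mul_rpow_of_nonneg _ _ hr0.le, ENNReal.mul_rpow_of_nonneg _ _ hr0.le,
              ← ENNReal.rpow_mul, ← ENNReal.rpow_mul, ← ENNReal.rpow_mul,
              one_div_mul_cancel hr0.ne', ENNReal.rpow_one, ENNReal.rpow_one,
              show (1 - 1 / r) * r = r - 1 by field_simp]
            ring
        _ = _ := by
            rw [← lintegral_const_mul (ρ t) (f := fun s => E t s * G s ^ r)
              ((hEt t).mul (hG.pow_const _))]
            congr 1
            refine lintegral_congr fun s => ?_
            ring
    rw [eLpNorm_eq_lintegral_rpow_enorm_toReal hq0 hqt, eLpNorm_eq_lintegral_rpow_enorm_toReal hq0 hqt]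
    simp only [enorm_eq_self, ← hr]
    have hmeas : Measurable (Function.uncurry fun t s => (E t s * ρ t) * G s ^ r) :=
      (hE.mul (hρ.comp measurable_fst)).mul ((hG.pow_const _).comp measurable_snd)
    calc (∫⁻ t, (ρ t ^ (1 / r) * ∫⁻ s, E t s * ρ s ^ (1 - 1 / r) * G s ∂μ) ^ r ∂μ) ^ (1 / r)
        ≤ (∫⁻ t, C ^ (r - 1) * (∫⁻ s, (E t s * ρ t) * G s ^ r ∂μ) ∂μ) ^ (1 / r) := by
          gcongr ?_ ^ _
          exact lintegral_mono_ae key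
      _ = (C ^ (r - 1) * ∫⁻ s, ∫⁻ t, (E t s * ρ t) * G s ^ r ∂μ ∂μ) ^ (1 / r) := by
          congr 1
          refine (lintegral_const_mul _ hmeas.lintegral_prod_right').trans ?_
          congr 1
          exact lintegral_lintegral_swap hmeas.aemeasurable
      _ ≤ (C ^ (r - 1) * ∫⁻ s, C * G s ^ r ∂μ) ^ (1 / r) := by
          gcongr ?_ ^ _
          refine mul_le_mul_right (lintegral_mono_ae ?_) _
          filter_upwards [h2] with s hs
          refine (lintegral_mul_const _ ((hE.comp measurable_prodMk_right).mul hρ)).trans_le ?_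
          exact mul_le_mul_left hs _
      _ = C * (∫⁻ s, G s ^ r ∂μ) ^ (1 / r) := by
          rw [lintegral_const_mul _ (hG.pow_const _), ← mul_assoc,
            ENNReal.mul_rpow_of_nonneg _ _ hth']
          congr 1
          conv_lhs => rw [← ENNReal.rpow_one C, ← ENNReal.rpow_mul, one_mul,
            ← ENNReal.rpow_add_of_nonneg _ _ (by linarith) zero_le_one,
            sub_add_cancel, ← ENNReal.rpow_mul, mul_one_div_cancel hr0.ne', ENNReal.rpow_one]

/-- Integrals of `exp (-β |X s - x|)` against `|X' s| ds` are bounded uniformly in `x`: substituting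
`y = X s` reduces them to the integral of a two-sided exponential. -/
theorem lintegral_exp_subst {S : Set ℝ} (hS : MeasurableSet S) {X X' : ℝ → ℝ}
    (hX : ∀ s ∈ S, HasDerivAt X (X' s) s) (hinj : InjOn X S) {β : ℝ} (hβ : 0 < β) (x : ℝ) :
    ∫⁻ s in S, ENNReal.ofReal (Real.exp (-β * |X s - x|)) * ENNReal.ofReal |X' s|
      ≤ ENNReal.ofReal (2 / β) := by
  have hI : ∫⁻ y : ℝ, ENNReal.ofReal (Real.exp (-β * |y|)) ≤ ENNReal.ofReal (2 / β) := by
    have h := integral_comp_abs (f := fun y => Real.exp (-β * y))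
    have h2 : ∫ y in Ioi (0:ℝ), Real.exp (-β * y) = 1 / β := by
      rw [integral_exp_mul_Ioi (by linarith)]; simp
    -- A non-integrable function would have Bochner integral `0`, but this one is `2 / β`.
    have hint : Integrable fun y : ℝ => Real.exp (-β * |y|) := by
      by_contra hn
      rw [integral_undef hn, h2] at h
      have : (0:ℝ) < 2 * (1 / β) := by positivity
      linarith
    rw [← ofReal_integral_eq_lintegral_ofReal hint (Eventually.of_forall fun _ => (Real.exp_pos _).le)]
    rw [h, h2]
    apply le_of_eq; congr 1; ring
  calc ∫⁻ s in S, ENNReal.ofReal (Real.exp (-β * |X s - x|)) * ENNReal.ofReal |X' s|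
      = ∫⁻ y in X '' S, ENNReal.ofReal (Real.exp (-β * |y - x|)) := by
        rw [lintegral_image_eq_lintegral_abs_deriv_mul hS
          (fun s hs => (hX s hs).hasDerivWithinAt) hinj]
        simp only [mul_comm]
    _ ≤ ∫⁻ y, ENNReal.ofReal (Real.exp (-β * |y - x|)) := setLIntegral_le_lintegral _ _
    _ = ∫⁻ y : ℝ, ENNReal.ofReal (Real.exp (-β * |y|)) :=
        lintegral_sub_right_eq_self (fun y : ℝ => ENNReal.ofReal (Real.exp (-β * |y|))) x
    _ ≤ _ := hI

/-! ### Kernel estimates for the Lorentz–Zygmund weights -/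

/-- The logarithmic variable in which the tail part of the Hardy operator is dominated by
convolution with a two-sided exponential; it decreases from `+∞` to `-∞` on `(0, ∞)`. -/
def hardyX (t : ℝ) : ℝ :=
  if t < 1 then Real.log (1 + Real.log (1 - Real.log t)) else -Real.log (1 + Real.log t)

/-- The density `|hardyX'|`, written as an exponential. -/
def hardyRho (t : ℝ) : ℝ :=
  if t < 1 then
    Real.exp (-Real.log t - Real.log (1 - Real.log t) - Real.log (1 + Real.log (1 - Real.log t)))
  else Real.exp (-Real.log t - Real.log (1 + Real.log t))

theorem measurable_hardyX : Measurable hardyX := by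
  unfold hardyX
  refine Measurable.ite measurableSet_Iio ?_ ?_ <;> fun_prop

theorem measurable_hardyRho : Measurable hardyRho := by
  unfold hardyRho
  refine Measurable.ite measurableSet_Iio ?_ ?_ <;> fun_prop

theorem hardyRho_pos (t : ℝ) : 0 < hardyRho t := by
  unfold hardyRho; split_ifs <;> exact Real.exp_pos _

/-- The column integrals of the exponential kernel in `hardyX` against `hardyRho` are bounded; the
bound has one summand for each of the ranges `(0, 1)` and `[1, ∞)`. -/
theorem lintegral_hardyRho {β : ℝ} (hβ : 0 < β) (x : ℝ) :
    ∫⁻ s in Ioi (0 : ℝ), ENNReal.ofReal (Real.exp (-β * |hardyX s - x|)) *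
      ENNReal.ofReal (hardyRho s) ≤ ENNReal.ofReal (2 / β) + ENNReal.ofReal (2 / β) := by
  have hU : Ioi (0 : ℝ) = Ioo 0 1 ∪ Ici 1 := by
    ext t; simp only [mem_Ioi, mem_union, mem_Ioo, mem_Ici]
    constructor
    · intro h; rcases lt_or_ge t 1 with h1 | h1 <;> simp [*]
    · rintro (h | h)
      · exact h.1
      · linarith
  rw [hU]
  refine (lintegral_union_le _ _ _).trans ?_
  gcongr
  · refine le_trans (le_of_eq ?_) (lintegral_exp_subst (S := Ioo 0 1) measurableSet_Ioo
      (X := fun t => Real.log (1 + Real.log (1 - Real.log t)))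
      (X' := fun t => (-t⁻¹ / (1 - Real.log t)) / (1 + Real.log (1 - Real.log t)))
      ?_ ?_ hβ x)
    · refine setLIntegral_congr_fun measurableSet_Ioo fun t ht => ?_
      have hl := Real.log_neg ht.1 ht.2
      have hl2 : 0 < Real.log (1 - Real.log t) := Real.log_pos (by linarith)
      have : hardyRho t = |(-t⁻¹ / (1 - Real.log t)) / (1 + Real.log (1 - Real.log t))| := by
        rw [abs_div, abs_div, abs_neg, abs_of_pos (inv_pos.2 ht.1),
          abs_of_pos (show 0 < 1 - Real.log t by linarith), abs_of_pos (show
            0 < 1 + Real.log (1 - Real.log t) by linarith)]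
        simp only [hardyRho, ht.2, if_true]
        rw [Real.exp_sub, Real.exp_sub, Real.exp_neg, Real.exp_log ht.1,
          Real.exp_log (by linarith), Real.exp_log (by linarith)]
      simp only [this]
      simp only [hardyX, ht.2, if_true]
    · intro t ht
      have hl := Real.log_neg ht.1 ht.2
      have hl2 : 0 < Real.log (1 - Real.log t) := Real.log_pos (by linarith)
      exact (((Real.hasDerivAt_log ht.1.ne').const_sub 1).log (by linarith)).const_add 1 |>.log
        (by linarith)
    · refine StrictAntiOn.injOn fun a ha b hb hab => ?_
      have hla := Real.log_neg ha.1 ha.2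
      have hlb := Real.log_neg hb.1 hb.2
      have hl2 : 0 < Real.log (1 - Real.log b) := Real.log_pos (by linarith)
      have hlab := Real.log_lt_log ha.1 hab
      have := Real.log_lt_log (show 0 < 1 - Real.log b by linarith)
        (show 1 - Real.log b < 1 - Real.log a by linarith)
      exact Real.log_lt_log (by linarith) (by linarith)
  · rw [setLIntegral_congr (Ioi_ae_eq_Ici (a := (1:ℝ)) (μ := volume)).symm]
    refine le_trans (le_of_eq ?_) (lintegral_exp_subst (S := Ioi 1) measurableSet_Ioi
      (X := fun t => -Real.log (1 + Real.log t))
      (X' := fun t => -(t⁻¹ / (1 + Real.log t)))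
      ?_ ?_ hβ x)
    · refine setLIntegral_congr_fun measurableSet_Ioi fun t (ht : 1 < t) => ?_
      have hl := Real.log_pos ht
      have ht0 : 0 < t := by linarith
      have : hardyRho t = |-(t⁻¹ / (1 + Real.log t))| := by
        rw [abs_neg, abs_div, abs_of_pos (inv_pos.2 ht0),
          abs_of_pos (show 0 < 1 + Real.log t by linarith)]
        simp only [hardyRho, not_lt.2 ht.le, if_false]
        rw [Real.exp_sub, Real.exp_neg, Real.exp_log ht0, Real.exp_log (by linarith)]
      simp only [this]
      simp only [hardyX, not_lt.2 ht.le, if_false]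
    · intro t (ht : 1 < t)
      have hl := Real.log_pos ht
      exact (((Real.hasDerivAt_log (by linarith)).const_add 1).log (by linarith)).neg
    · refine StrictAntiOn.injOn fun a (ha : 1 < a) b (hb : 1 < b) hab => ?_
      have hla := Real.log_pos ha
      have hlab := Real.log_lt_log (by linarith) hab
      have := Real.log_lt_log (show 0 < 1 + Real.log a by linarith)
        (show 1 + Real.log a < 1 + Real.log b by linarith)
      exact neg_lt_neg this

/-- The column integrals of the exponential kernel in `log` against `ds / s` are bounded. -/
theorem lintegral_inv {β : ℝ} (hβ : 0 < β) (x : ℝ) :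
    ∫⁻ s in Ioi (0 : ℝ), ENNReal.ofReal (Real.exp (-β * |Real.log s - x|)) *
      ENNReal.ofReal (s⁻¹) ≤ ENNReal.ofReal (2 / β) := by
  refine le_trans (le_of_eq ?_) (lintegral_exp_subst (S := Ioi 0) measurableSet_Ioi
      (X := Real.log) (X' := fun t => t⁻¹) (fun t ht => Real.hasDerivAt_log (ne_of_gt ht))
      Real.log_injOn_pos hβ x)
  refine setLIntegral_congr_fun measurableSet_Ioi fun t (ht : 0 < t) => ?_
  simp only [abs_of_pos (inv_pos.2 ht)]

theorem one_le_ellellB_aux {t : ℝ} (h0 : 0 < t) (h1 : t < 1) :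
    0 < Real.log (1 - Real.log t) := Real.log_pos (by linarith [Real.log_neg h0 h1])

theorem ellA_pos {a b t : ℝ} (ht : 0 < t) : 0 < ellA a b t := by
  unfold ellA
  split_ifs with h
  · exact Real.rpow_pos_of_pos (by linarith [Real.log_neg ht h]) _
  · exact Real.rpow_pos_of_pos (by linarith [Real.log_nonneg (not_lt.1 h)]) _

theorem ellellB_pos {a b t : ℝ} (ht : 0 < t) : 0 < ellellB a b t := by
  unfold ellellB
  split_ifs with h
  · exact Real.rpow_pos_of_pos (by linarith [one_le_ellellB_aux ht h]) _
  · refine Real.rpow_pos_of_pos ?_ _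
    have := Real.log_nonneg (not_lt.1 h)
    linarith [Real.log_nonneg (show 1 ≤ 1 + Real.log t by linarith)]

theorem measurable_ellA (a b : ℝ) : Measurable (ellA a b) := by
  unfold ellA
  refine Measurable.ite measurableSet_Iio ?_ ?_ <;> fun_prop

theorem measurable_ellellB (a b : ℝ) : Measurable (ellellB a b) := by
  unfold ellellB
  refine Measurable.ite measurableSet_Iio ?_ ?_ <;> fun_prop

theorem ellellB_zero (t : ℝ) : ellellB 0 0 t = 1 := by
  simp [ellellB]

theorem one_add_log_rpow_le {a δ : ℝ} (ha : 0 < a) (hδ : 0 < δ) :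
    ∃ C : ℝ, 0 < C ∧ ∀ x : ℝ, 1 ≤ x → (1 + Real.log x) ^ a ≤ C * x ^ δ := by
  refine ⟨(1 + a / δ) ^ a, by positivity, fun x hx => ?_⟩
  have h0 := Real.log_le_rpow_div (show 0 ≤ x by linarith) (show 0 < δ / a by positivity)
  have h1 : 1 ≤ x ^ (δ / a) := Real.one_le_rpow hx (by positivity)
  have h2 : 1 + Real.log x ≤ (1 + a / δ) * x ^ (δ / a) := by
    have : x ^ (δ / a) / (δ / a) = a / δ * x ^ (δ / a) := by field_simp
    rw [this] at h0
    linarith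
  calc (1 + Real.log x) ^ a ≤ ((1 + a / δ) * x ^ (δ / a)) ^ a := by
        refine Real.rpow_le_rpow (by linarith [Real.log_nonneg hx]) h2 ha.le
    _ = (1 + a / δ) ^ a * x ^ δ := by
        rw [Real.mul_rpow (by positivity) (by positivity), ← Real.rpow_mul (by linarith),
          div_mul_cancel₀ _ ha.ne']

/-- The broken logarithm varies slowly: its growth from `s` to `t` is at most that of any positive
power of `t / s`. -/
theorem ellA_ratio {a0 ai δ : ℝ} (h0 : 0 ≤ a0) (hi : 0 < ai) (hδ : 0 < δ) :
    ∃ C : ℝ, 0 < C ∧ ∀ s t : ℝ, 0 < s → s ≤ t →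
      ellA a0 ai t ≤ C * (t / s) ^ δ * ellA a0 ai s := by
  obtain ⟨C, hC, h⟩ := one_add_log_rpow_le hi hδ
  refine ⟨C, hC, fun s t hs hst => ?_⟩
  have ht : 0 < t := by linarith
  have hts : 1 ≤ t / s := (one_le_div hs).2 hst
  have hlts : 0 ≤ Real.log (t / s) := Real.log_nonneg hts
  have hlog : Real.log (t / s) = Real.log t - Real.log s := Real.log_div ht.ne' hs.ne'
  refine le_trans ?_ (mul_le_mul_of_nonneg_right (h _ hts) (ellA_pos hs).le)
  unfold ellA
  split_ifs with h1 h2 h2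
  · have e1 : (1 - Real.log t) ^ a0 ≤ (1 - Real.log s) ^ a0 :=
      Real.rpow_le_rpow (by linarith [Real.log_neg ht h1]) (by linarith) h0
    have e2 : 1 ≤ (1 + Real.log (t / s)) ^ ai := Real.one_le_rpow (by linarith) hi.le
    have e3 : 0 ≤ (1 - Real.log s) ^ a0 := Real.rpow_nonneg (by linarith [Real.log_neg hs h2]) _
    nlinarith
  · linarith
  · have hls := Real.log_neg hs h2
    have hlt := Real.log_nonneg (not_lt.1 h1)
    have e1 : (1 + Real.log t) ^ ai ≤ (1 + Real.log (t / s)) ^ ai :=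
      Real.rpow_le_rpow (by linarith) (by linarith) hi.le
    have e2 : 1 ≤ (1 - Real.log s) ^ a0 := Real.one_le_rpow (by linarith) h0
    have e3 : 0 ≤ (1 + Real.log (t / s)) ^ ai := Real.rpow_nonneg (by linarith) _
    nlinarith
  · have hls := Real.log_nonneg (not_lt.1 h2)
    rw [← Real.mul_rpow (by linarith) (by linarith)]
    refine Real.rpow_le_rpow (by linarith) ?_ hi.le
    nlinarith

/-- The tail part of the weighted Hardy kernel is dominated by an exponential kernel in the
variable `hardyX`. -/
theorem kernel_tail {θ αi κ : ℝ} (h1 : θ < 1) (hα : 1 - θ < αi) {t s : ℝ} (ht : 0 < t)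
    (hts : t ≤ s) :
    (t ^ (0 - θ) * ellA (-θ) (αi - 1) t * ellellB (-1) 0 t) * s ^ (κ - 1) ≤
      hardyRho t ^ θ * Real.exp (-min (1 - θ) (αi - 1 + θ) * |hardyX t - hardyX s|) *
        hardyRho s ^ (1 - θ) * (s ^ (κ - θ) * ellA (1 - θ) αi s * ellellB 0 0 s) := by
  have hs : 0 < s := ht.trans_le hts
  set β := min (1 - θ) (αi - 1 + θ) with hβ
  have b1 : β ≤ 1 - θ := min_le_left _ _
  have b2 : β ≤ αi - 1 + θ := min_le_right _ _
  have hlog : Real.log t ≤ Real.log s := Real.log_le_log ht hts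
  rw [ellellB_zero, mul_one]
  by_cases hs1 : s < 1
  · have ht1 : t < 1 := hts.trans_lt hs1
    have lt := Real.log_neg ht ht1
    have ls := Real.log_neg hs hs1
    have llt := one_le_ellellB_aux ht ht1
    have lls := one_le_ellellB_aux hs hs1
    have m1 := Real.log_le_log (show 0 < 1 - Real.log s by linarith)
      (show 1 - Real.log s ≤ 1 - Real.log t by linarith)
    have m2 := Real.log_le_log (show 0 < 1 + Real.log (1 - Real.log s) by linarith)
      (show 1 + Real.log (1 - Real.log s) ≤ 1 + Real.log (1 - Real.log t) by linarith)
    -- Written as exponentials, the two sides are compared by a linear inequality in the logarithms.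
    simp only [ellA, ellellB, hardyRho, hardyX, hs1, ht1, if_true]
    rw [abs_of_nonneg (by linarith), ← Real.exp_mul, ← Real.exp_mul, Real.rpow_def_of_pos ht,
      Real.rpow_def_of_pos hs, Real.rpow_def_of_pos hs, Real.rpow_def_of_pos (by linarith),
      Real.rpow_def_of_pos (by linarith), Real.rpow_def_of_pos (by linarith)]
    simp only [← Real.exp_add]
    refine Real.exp_le_exp.2 ?_
    nlinarith [mul_nonneg (sub_nonneg.2 b1) (sub_nonneg.2 m2)]
  · have ls := Real.log_nonneg (not_lt.1 hs1)
    have lls := Real.log_nonneg (show 1 ≤ 1 + Real.log s by linarith)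
    by_cases ht1 : t < 1
    · have lt := Real.log_neg ht ht1
      have llt := one_le_ellellB_aux ht ht1
      have lllt := Real.log_pos (show 1 < 1 + Real.log (1 - Real.log t) by linarith)
      simp only [ellA, ellellB, hardyRho, hardyX, hs1, ht1, if_true, if_false]
      rw [abs_of_nonneg (by linarith), ← Real.exp_mul, ← Real.exp_mul, Real.rpow_def_of_pos ht,
        Real.rpow_def_of_pos hs, Real.rpow_def_of_pos hs, Real.rpow_def_of_pos (by linarith),
        Real.rpow_def_of_pos (by linarith), Real.rpow_def_of_pos (by linarith)]
      simp only [← Real.exp_add]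
      refine Real.exp_le_exp.2 ?_
      nlinarith [mul_nonneg (sub_nonneg.2 b1) lllt.le, mul_nonneg (sub_nonneg.2 b2) lls]
    · have lt := Real.log_nonneg (not_lt.1 ht1)
      have llt := Real.log_nonneg (show 1 ≤ 1 + Real.log t by linarith)
      have m2 := Real.log_le_log (show 0 < 1 + Real.log t by linarith)
        (show 1 + Real.log t ≤ 1 + Real.log s by linarith)
      simp only [ellA, ellellB, hardyRho, hardyX, hs1, ht1, if_false, Real.rpow_zero, mul_one]
      rw [abs_of_nonneg (by linarith), ← Real.exp_mul, ← Real.exp_mul, Real.rpow_def_of_pos ht,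
        Real.rpow_def_of_pos hs, Real.rpow_def_of_pos hs, Real.rpow_def_of_pos (by linarith),
        Real.rpow_def_of_pos (by linarith)]
      simp only [← Real.exp_add]
      refine Real.exp_le_exp.2 ?_
      nlinarith [mul_nonneg (sub_nonneg.2 b2) (sub_nonneg.2 m2)]

/-- The local part of the weighted Hardy kernel is dominated by an exponential kernel in the
variable `log`: the factor `(s / t) ^ (1 - κ)` absorbs the slowly varying weights, and half of the
exponent is left over as decay. -/
theorem kernel_local {θ αi κ : ℝ} (h1 : θ < 1) (hα : 1 - θ < αi) (hκ : κ < 1) :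
    ∃ C : ℝ, 0 < C ∧ ∀ s t : ℝ, 0 < s → s ≤ t →
      (t ^ (0 - θ) * ellA (-θ) (αi - 1) t * ellellB (-1) 0 t) * t ^ (κ - 1) ≤
      C * ((t⁻¹) ^ θ * Real.exp (-((1 - κ) / 2) * |Real.log t - Real.log s|) *
        (s⁻¹) ^ (1 - θ) * (s ^ (κ - θ) * ellA (1 - θ) αi s * ellellB 0 0 s)) := by
  obtain ⟨C, hC, h⟩ := ellA_ratio (a0 := 1 - θ) (ai := αi) (δ := (1 - κ) / 2) (by linarith)
    (by linarith) (by linarith)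
  refine ⟨C, hC, fun s t hs hst => ?_⟩
  have ht : 0 < t := hs.trans_le hst
  have hlog : Real.log s ≤ Real.log t := Real.log_le_log hs hst
  have hW : ellA (-θ) (αi - 1) t * ellellB (-1) 0 t ≤ ellA (1 - θ) αi t := by
    unfold ellA ellellB
    split_ifs with ht1
    · have lt := Real.log_neg ht ht1
      have llt := one_le_ellellB_aux ht ht1
      have e1 : (1 - Real.log t) ^ (-θ) ≤ (1 - Real.log t) ^ (1 - θ) :=
        Real.rpow_le_rpow_of_exponent_le (by linarith) (by linarith)
      have e2 : (1 + Real.log (1 - Real.log t)) ^ (-1 : ℝ) ≤ 1 :=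
        Real.rpow_le_one_of_one_le_of_nonpos (by linarith) (by norm_num)
      have e3 : 0 ≤ (1 - Real.log t) ^ (-θ) := Real.rpow_nonneg (by linarith) _
      nlinarith
    · rw [Real.rpow_zero, mul_one]
      have lt := Real.log_nonneg (not_lt.1 ht1)
      exact Real.rpow_le_rpow_of_exponent_le (by linarith) (by linarith)
  have hV := ellA_pos (a := 1 - θ) (b := αi) hs
  rw [ellellB_zero, mul_one]
  calc (t ^ (0 - θ) * ellA (-θ) (αi - 1) t * ellellB (-1) 0 t) * t ^ (κ - 1)
      = t ^ (0 - θ) * t ^ (κ - 1) * (ellA (-θ) (αi - 1) t * ellellB (-1) 0 t) := by ring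
    _ ≤ t ^ (0 - θ) * t ^ (κ - 1) * (C * (t / s) ^ ((1 - κ) / 2) * ellA (1 - θ) αi s) := by
        exact mul_le_mul_of_nonneg_left (hW.trans (h s t hs hst)) (by positivity)
    _ ≤ C * ((t⁻¹) ^ θ * Real.exp (-((1 - κ) / 2) * |Real.log t - Real.log s|) *
        (s⁻¹) ^ (1 - θ) * s ^ (κ - θ)) * ellA (1 - θ) αi s := by
        rw [abs_of_nonneg (by linarith)]
        have e : t ^ (0 - θ) * t ^ (κ - 1) * (t / s) ^ ((1 - κ) / 2) ≤
            (t⁻¹) ^ θ * Real.exp (-((1 - κ) / 2) * (Real.log t - Real.log s)) *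
              (s⁻¹) ^ (1 - θ) * s ^ (κ - θ) := by
          rw [Real.rpow_def_of_pos ht, Real.rpow_def_of_pos ht, Real.rpow_def_of_pos (div_pos ht hs),
            Real.rpow_def_of_pos (inv_pos.2 ht), Real.rpow_def_of_pos (inv_pos.2 hs),
            Real.rpow_def_of_pos hs, Real.log_div ht.ne' hs.ne', Real.log_inv, Real.log_inv]
          simp only [← Real.exp_add]
          refine Real.exp_le_exp.2 ?_
          nlinarith
        have := mul_le_mul_of_nonneg_left e (mul_nonneg hC.le hV.le)
        linarith
    _ = _ := by ring

/-! ### The weighted Hardy inequality -/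

theorem one_div_toReal_lt_one {q : ℝ≥0∞} (hq : 1 < q) : 1 / q.toReal < 1 := by
  by_cases h : q = ⊤
  · simp [h]
  · have : 1 < q.toReal := by
      rw [← ENNReal.toReal_one]
      exact (ENNReal.toReal_lt_toReal one_ne_top h).2 hq
    rw [div_lt_one (by linarith)]; exact this

set_option maxHeartbeats 400000 in
/-- The weighted Hardy inequality for the kernel `max t s ^ (κ - 1)` between the two
Lorentz–Zygmund weights. The part `s ≤ t` is handled by Schur's test in the variable `log t`, the
part `t ≤ s` by Schur's test in the variable `hardyX t`. No monotonicity of `g` is needed. -/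
theorem hardy_main {q : ℝ≥0∞} (hq : 1 < q) {κ αi : ℝ} (hκ : κ < 1)
    (hα : 1 - 1 / q.toReal < αi) :
    ∃ C : ℝ, 0 < C ∧ ∀ g : ℝ → ℝ≥0∞, Measurable g →
      eLpNorm (fun t => ENNReal.ofReal (t ^ (0 - 1 / q.toReal) *
          ellA (-(1 / q.toReal)) (αi - 1) t * ellellB (-1) 0 t) *
          ∫⁻ s in Ioi (0 : ℝ), ENNReal.ofReal (max t s ^ (κ - 1)) * g s) q
          (volume.restrict (Ioi 0)) ≤
        ENNReal.ofReal C * eLpNorm (fun t => ENNReal.ofReal (t ^ (κ - 1 / q.toReal) *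
          ellA (1 - 1 / q.toReal) αi t * ellellB 0 0 t) * g t) q
          (volume.restrict (Ioi 0)) := by
  have hθ1 := one_div_toReal_lt_one hq
  have hθ0 : 0 ≤ 1 / q.toReal := by positivity
  set θ := 1 / q.toReal with hθ
  obtain ⟨C1, hC1, hloc⟩ := kernel_local (κ := κ) hθ1 hα hκ
  set β1 := (1 - κ) / 2 with hβ1
  set β2 := min (1 - θ) (αi - 1 + θ) with hβ2
  have hβ1p : 0 < β1 := by rw [hβ1]; linarith
  have hβ2p : 0 < β2 := lt_min (by linarith) (by linarith)
  set E1 : ℝ → ℝ → ℝ≥0∞ := fun t s =>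
    ENNReal.ofReal C1 * ENNReal.ofReal (Real.exp (-β1 * |Real.log t - Real.log s|)) with hE1
  set E2 : ℝ → ℝ → ℝ≥0∞ := fun t s =>
    ENNReal.ofReal (Real.exp (-β2 * |hardyX t - hardyX s|)) with hE2
  have mE1 : Measurable (Function.uncurry E1) := by
    simp only [hE1, Function.uncurry_def]; fun_prop
  have mX := measurable_hardyX
  have mm1 : ∀ t, Measurable (E1 t) := by
    intro t; simp only [hE1]; fun_prop
  have mm2 : ∀ t, Measurable (E2 t) := by
    intro t; simp only [hE2]; fun_prop
  have mE2 : Measurable (Function.uncurry E2) := by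
    simp only [hE2, Function.uncurry_def]; fun_prop
  set ρ1 : ℝ → ℝ≥0∞ := fun s => ENNReal.ofReal (s⁻¹) with hρ1
  set ρ2 : ℝ → ℝ≥0∞ := fun s => ENNReal.ofReal (hardyRho s) with hρ2
  have mρ1 : Measurable ρ1 := by simp only [hρ1]; fun_prop
  have mR := measurable_hardyRho
  have mρ2 : Measurable ρ2 := by simp only [hρ2]; fun_prop
  set K1 := C1 * (2 / β1) with hK1
  have b1 : ∀ x : ℝ, ∫⁻ s in Ioi (0 : ℝ), E1 s x * ρ1 s ≤ ENNReal.ofReal K1 := by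
    intro x
    simp only [hE1, hρ1, mul_assoc]
    rw [lintegral_const_mul _ (by fun_prop), hK1, ENNReal.ofReal_mul hC1.le]
    gcongr
    exact lintegral_inv hβ1p _
  have b2 : ∀ x : ℝ, ∫⁻ s in Ioi (0 : ℝ), E2 s x * ρ2 s ≤
      ENNReal.ofReal (2 / β2) + ENNReal.ofReal (2 / β2) := fun x => lintegral_hardyRho hβ2p _
  have s1 : ∀ t s, E1 t s = E1 s t := by intro t s; simp only [hE1]; rw [abs_sub_comm]
  have s2 : ∀ t s, E2 t s = E2 s t := by intro t s; simp only [hE2]; rw [abs_sub_comm]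
  refine ⟨K1 + 4 / β2, by positivity, fun g hg => ?_⟩
  set V : ℝ → ℝ := fun s => s ^ (κ - θ) * ellA (1 - θ) αi s * ellellB 0 0 s with hV
  have mV : Measurable V := by
    have := measurable_ellA (1 - θ) αi
    have := measurable_ellellB 0 0
    simp only [hV]; fun_prop
  set G : ℝ → ℝ≥0∞ := fun t => ENNReal.ofReal (V t) * g t with hG
  have mG : Measurable G := by simp only [hG]; fun_prop
  have t1 := schur_test (μ := volume.restrict (Ioi (0 : ℝ))) hq mE1 mρ1 (C := ENNReal.ofReal K1)
    (ae_of_all _ fun t => by simpa only [s1 t] using b1 t) (ae_of_all _ b1) mG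
  have t2 := schur_test (μ := volume.restrict (Ioi (0 : ℝ))) hq mE2 mρ2
    (C := ENNReal.ofReal (2 / β2) + ENNReal.ofReal (2 / β2))
    (ae_of_all _ fun t => by simpa only [s2 t] using b2 t) (ae_of_all _ b2) mG
  rw [← hθ] at t1 t2
  set I1 : ℝ → ℝ≥0∞ := fun t => ∫⁻ s in Ioi (0 : ℝ), E1 t s * ρ1 s ^ (1 - θ) * G s with hI1
  set I2 : ℝ → ℝ≥0∞ := fun t => ∫⁻ s in Ioi (0 : ℝ), E2 t s * ρ2 s ^ (1 - θ) * G s with hI2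
  have q1 : Measurable (Function.uncurry fun t s => E1 t s * ρ1 s ^ (1 - θ) * G s) := by
    have := mE1
    simp only [Function.uncurry_def] at this ⊢
    fun_prop
  have q2 : Measurable (Function.uncurry fun t s => E2 t s * ρ2 s ^ (1 - θ) * G s) := by
    have := mE2
    simp only [Function.uncurry_def] at this ⊢
    fun_prop
  have mI1 : Measurable I1 := Measurable.lintegral_prod_right' q1
  have mI2 : Measurable I2 := Measurable.lintegral_prod_right' q2
  have hpt : ∀ᵐ t ∂volume.restrict (Ioi (0 : ℝ)),
      ‖ENNReal.ofReal (t ^ (0 - θ) * ellA (-θ) (αi - 1) t * ellellB (-1) 0 t) *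
          ∫⁻ s in Ioi (0 : ℝ), ENNReal.ofReal (max t s ^ (κ - 1)) * g s‖ₑ ≤
        ‖ρ1 t ^ θ * I1 t + ρ2 t ^ θ * I2 t‖ₑ := by
    filter_upwards [ae_restrict_mem measurableSet_Ioi] with t (ht : 0 < t)
    simp only [enorm_eq_self]
    have r1 : Measurable (fun s => E1 t s * ρ1 s ^ (1 - θ) * G s) :=
      ((mm1 t).mul (mρ1.pow_const _)).mul mG
    have r2 : Measurable (fun s => E2 t s * ρ2 s ^ (1 - θ) * G s) :=
      ((mm2 t).mul (mρ2.pow_const _)).mul mG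
    have e1 : ENNReal.ofReal (t ^ (0 - θ) * ellA (-θ) (αi - 1) t * ellellB (-1) 0 t) *
          ∫⁻ s in Ioi (0 : ℝ), ENNReal.ofReal (max t s ^ (κ - 1)) * g s =
        ∫⁻ s in Ioi (0 : ℝ), ENNReal.ofReal (t ^ (0 - θ) * ellA (-θ) (αi - 1) t *
          ellellB (-1) 0 t) * (ENNReal.ofReal (max t s ^ (κ - 1)) * g s) :=
      (lintegral_const_mul _ (((measurable_const.max measurable_id).pow_const _).ennreal_ofReal.mul
        hg)).symm
    rw [e1, hI1, hI2]
    simp only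
    rw [← lintegral_const_mul _ r1, ← lintegral_const_mul _ r2,
      ← lintegral_add_left (r1.const_mul _)]
    refine setLIntegral_mono' measurableSet_Ioi fun s (hs : 0 < s) => ?_
    have hVs : 0 ≤ V s := by
      simp only [hV]
      have := ellA_pos (a := 1 - θ) (b := αi) hs
      have := ellellB_pos (a := 0) (b := 0) hs
      positivity
    have hW : 0 ≤ t ^ (0 - θ) * ellA (-θ) (αi - 1) t * ellellB (-1) 0 t := by
      have := ellA_pos (a := -θ) (b := αi - 1) ht
      have := ellellB_pos (a := -1) (b := 0) ht
      positivity
    have hr := hardyRho_pos t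
    have hr' := hardyRho_pos s
    rcases le_total s t with hst | hst
    · refine le_trans ?_ le_self_add
      rw [max_eq_left hst, ← mul_assoc, ← ENNReal.ofReal_mul hW]
      refine (mul_le_mul_left (ENNReal.ofReal_le_ofReal (hloc s t hs hst)) _).trans (le_of_eq ?_)
      simp only [hE1, hρ1, hG, hV]
      rw [ENNReal.ofReal_mul hC1.le, ENNReal.ofReal_mul (by positivity),
        ENNReal.ofReal_mul (by positivity), ENNReal.ofReal_mul (by positivity),
        ← ENNReal.ofReal_rpow_of_nonneg (by positivity) hθ0,
        ← ENNReal.ofReal_rpow_of_nonneg (by positivity) (by linarith)]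
      ring
    · refine le_trans ?_ le_add_self
      rw [max_eq_right hst, ← mul_assoc, ← ENNReal.ofReal_mul hW]
      refine (mul_le_mul_left (ENNReal.ofReal_le_ofReal
        (kernel_tail (κ := κ) hθ1 hα ht hst)) _).trans (le_of_eq ?_)
      simp only [hE2, hρ2, hG, hV]
      rw [ENNReal.ofReal_mul (by positivity),
        ENNReal.ofReal_mul (by positivity), ENNReal.ofReal_mul (by positivity),
        ← ENNReal.ofReal_rpow_of_nonneg hr.le hθ0,
        ← ENNReal.ofReal_rpow_of_nonneg hr'.le (by linarith)]
      ring
  refine (eLpNorm_mono_enorm_ae hpt).trans ?_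
  refine (eLpNorm_add_le (((mρ1.pow_const _).mul mI1).aestronglyMeasurable)
    (((mρ2.pow_const _).mul mI2).aestronglyMeasurable) hq.le).trans ?_
  refine (add_le_add t1 t2).trans (le_of_eq ?_)
  rw [← add_mul, ← ENNReal.ofReal_add (by positivity) (by positivity),
    ← ENNReal.ofReal_add (by positivity) (by positivity)]
  congr 2
  ring

/-! ### Rearrangements and the Riesz kernel -/

theorem rearrE_antitone {α : Type*} [MeasurableSpace α] (μ : Measure α) (f : α → ℝ≥0∞) :
    Antitone (rearrE μ f) := fun _ _ hst =>
  sInf_le_sInf fun _ hl => le_trans hl (ENNReal.ofReal_le_ofReal hst)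

theorem lt_measure_of_lt_rearrE {α : Type*} [MeasurableSpace α] {μ : Measure α} {f : α → ℝ≥0∞}
    {l : ℝ≥0∞} {t : ℝ} (h : l < rearrE μ f t) : ENNReal.ofReal t < μ {x | l < f x} := by
  by_contra! hc
  exact absurd (sInf_le (show l ∈ {l : ℝ≥0∞ | μ {x | l < f x} ≤ ENNReal.ofReal t} from hc))
    (not_le.2 h)

theorem le_rearrE_of_lt_measure {α : Type*} [MeasurableSpace α] {μ : Measure α} {f : α → ℝ≥0∞}
    {l : ℝ≥0∞} {t : ℝ} (h : ENNReal.ofReal t < μ {x | l < f x}) : l ≤ rearrE μ f t := by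
  refine le_sInf fun l' hl' => ?_
  by_contra! hc
  exact absurd (h.trans_le (measure_mono fun x hx => lt_trans hc hx)) (not_lt.2 hl')

theorem rearrE_mono {α : Type*} [MeasurableSpace α] {μ : Measure α} {f g : α → ℝ≥0∞}
    (h : f ≤ᵐ[μ] g) (t : ℝ) : rearrE μ f t ≤ rearrE μ g t := by
  refine sInf_le_sInf fun l hl => le_trans (measure_mono_ae ?_) hl
  filter_upwards [h] with x hx (hlx : l < f x)
  exact hlx.trans_le hx

theorem rearrE_const_mul {α : Type*} [MeasurableSpace α] {μ : Measure α} {f : α → ℝ≥0∞}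
    {c : ℝ≥0∞} (hc0 : c ≠ 0) (hc : c ≠ ⊤) (t : ℝ) :
    rearrE μ (fun x => c * f x) t ≤ c * rearrE μ f t := by
  refine le_of_forall_lt fun l hl => ?_
  by_contra! hcon
  have h1 := lt_measure_of_lt_rearrE hl
  have h2 : {x | l < c * f x} = {x | l / c < f x} := by
    ext x
    simp only [mem_ofPred_eq]
    rw [ENNReal.div_lt_iff (Or.inl hc0) (Or.inl hc), mul_comm]
  obtain ⟨l', hl1, hl2⟩ := exists_between hl
  have h3 : {x | l' < c * f x} = {x | l' / c < f x} := by
    ext x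
    simp only [mem_ofPred_eq]
    rw [ENNReal.div_lt_iff (Or.inl hc0) (Or.inl hc), mul_comm]
  have h4 := lt_measure_of_lt_rearrE hl2
  rw [h3] at h4
  have h5 := le_rearrE_of_lt_measure h4
  have h6 : l' ≤ c * rearrE μ f t := by
    rw [mul_comm]
    exact (ENNReal.div_le_iff hc0 hc).1 h5
  exact absurd (hl1.trans_le h6) (not_lt.2 hcon)

/-- The Riesz kernel `‖x - y‖ ^ (m - n)` on `ℝⁿ`. -/
def rieszK (n m : ℕ) (x y : Euc n) : ℝ≥0∞ := ENNReal.ofReal (‖x - y‖ ^ ((m : ℝ) - n))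

theorem measurable_rieszK (n m : ℕ) : Measurable (Function.uncurry (rieszK n m)) := by
  unfold rieszK
  simp only [Function.uncurry_def]
  fun_prop

theorem rieszK_comm (n m : ℕ) (x y : Euc n) : rieszK n m x y = rieszK n m y x := by
  unfold rieszK; rw [norm_sub_rev]

theorem volume_rieszK_lt {n m : ℕ} (hmn : m < n) (x : Euc n) {a : ℝ} (ha : 0 < a) :
    volume {y : Euc n | a < ‖x - y‖ ^ ((m : ℝ) - n)} ≤
      ENNReal.ofReal (a ^ (-((n : ℝ) / (n - m)))) * volume (Metric.ball (0 : Euc n) 1) := by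
  have hnm : 0 < (n : ℝ) - m := by
    have : (m : ℝ) < n := by exact_mod_cast hmn
    linarith
  set r := a ^ (-(1 / ((n : ℝ) - m))) with hr
  have hr0 : 0 < r := Real.rpow_pos_of_pos ha _
  have hsub : {y : Euc n | a < ‖x - y‖ ^ ((m : ℝ) - n)} ⊆ Metric.ball x r := by
    intro y (hy : a < _)
    rw [Metric.mem_ball, dist_comm, dist_eq_norm]
    rcases (norm_nonneg (x - y)).eq_or_lt with h0 | h0
    · rw [← h0]; exact hr0
    · by_contra! hc
      have h1 : ‖x - y‖ ^ ((m : ℝ) - n) ≤ r ^ ((m : ℝ) - n) :=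
        Real.rpow_le_rpow_of_nonpos hr0 hc (by linarith)
      have h2 : r ^ ((m : ℝ) - n) = a := by
        rw [hr, ← Real.rpow_mul ha.le]
        have : -(1 / ((n : ℝ) - m)) * ((m : ℝ) - n) = 1 := by field_simp; ring
        rw [this, Real.rpow_one]
      linarith
  refine (measure_mono hsub).trans (le_of_eq ?_)
  rw [Measure.addHaar_ball_of_pos _ _ hr0, finrank_euclideanSpace_fin, hr, ← Real.rpow_natCast,
    ← Real.rpow_mul ha.le]
  congr 3
  field_simp

/-- The integral of the Riesz kernel over a set is at most of the order of its integral over a ball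
of the same measure. -/
theorem rieszK_set_bound {n m : ℕ} (hm : 0 < m) (hmn : m < n) :
    ∃ C : ℝ, 0 < C ∧ ∀ (S : Set (Euc n)) (x : Euc n),
      ∫⁻ y in S, rieszK n m x y ≤ ENNReal.ofReal C * volume S ^ ((m : ℝ) / n) := by
  have hm' : (0 : ℝ) < m := by exact_mod_cast hm
  have hmn' : (m : ℝ) < n := by exact_mod_cast hmn
  set ω := (volume (Metric.ball (0 : Euc n) 1)).toReal with hω
  have hω' : volume (Metric.ball (0 : Euc n) 1) = ENNReal.ofReal ω :=
    (ENNReal.ofReal_toReal measure_ball_lt_top.ne).symm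
  have hω0 : 0 ≤ ω := ENNReal.toReal_nonneg
  have hn' : (0 : ℝ) < n := hm'.trans hmn'
  have hnm : (n : ℝ) - m ≠ 0 := by intro h; linarith
  set p := (n : ℝ) / (n - m) with hp
  have hp1 : 1 < p := by rw [hp, one_lt_div] <;> linarith
  refine ⟨1 + ω / (p - 1), by have : 0 < p - 1 := by linarith
                              positivity, fun S x => ?_⟩
  have hC0 : 0 < 1 + ω / (p - 1) := by
    have : 0 < p - 1 := by linarith
    positivity
  by_cases hS0 : volume S = 0
  · rw [Measure.restrict_eq_zero.2 hS0]; simp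
  by_cases hSt : volume S = ⊤
  · rw [hSt, ENNReal.top_rpow_of_pos (div_pos hm' hn'), ENNReal.mul_top (by simpa using hC0)]
    exact le_top
  set v := (volume S).toReal with hv
  have hv' : volume S = ENNReal.ofReal v := (ENNReal.ofReal_toReal hSt).symm
  have hv0 : 0 < v := ENNReal.toReal_pos hS0 hSt
  -- `a0` is the height at which the weak-type bound `a ^ (-p)` for the distribution function of the
  -- kernel meets the trivial bound `volume S`.
  set a0 := v ^ (-(1 / p)) with ha0
  have ha0p : 0 < a0 := Real.rpow_pos_of_pos hv0 _
  unfold rieszK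
  rw [lintegral_eq_lintegral_meas_lt _ (ae_of_all _ fun y => by positivity) (by fun_prop)]
  have hU : Ioi (0 : ℝ) = Ioc 0 a0 ∪ Ioi a0 := (Ioc_union_Ioi_eq_Ioi ha0p.le).symm
  rw [hU]
  refine (lintegral_union_le _ _ _).trans ?_
  have i1 : ∫⁻ a in Ioc 0 a0, (volume.restrict S) {y : Euc n | a < ‖x - y‖ ^ ((m : ℝ) - n)} ≤
      ENNReal.ofReal (v ^ ((m : ℝ) / n)) := by
    calc _ ≤ ∫⁻ a in Ioc 0 a0, ENNReal.ofReal v := by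
          refine lintegral_mono fun a => ?_
          rw [← hv']
          exact (measure_mono (subset_univ _)).trans (by simp)
      _ = ENNReal.ofReal (v ^ ((m : ℝ) / n)) := by
          rw [setLIntegral_const, Real.volume_Ioc, sub_zero, ← ENNReal.ofReal_mul hv0.le]
          congr 1
          rw [ha0]
          nth_rewrite 1 [← Real.rpow_one v]
          rw [← Real.rpow_add hv0]
          congr 1
          rw [hp]; field_simp; ring
  have i2 : ∫⁻ a in Ioi a0, (volume.restrict S) {y : Euc n | a < ‖x - y‖ ^ ((m : ℝ) - n)} ≤
      ENNReal.ofReal (ω / (p - 1) * v ^ ((m : ℝ) / n)) := by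
    calc _ ≤ ∫⁻ a in Ioi a0, ENNReal.ofReal (a ^ (-p)) * ENNReal.ofReal ω := by
          refine setLIntegral_mono' measurableSet_Ioi fun a (ha : a0 < a) => ?_
          rw [← hω']
          exact (Measure.restrict_apply_le _ _).trans (volume_rieszK_lt hmn x (ha0p.trans ha))
      _ = ENNReal.ofReal (ω / (p - 1) * v ^ ((m : ℝ) / n)) := by
          rw [lintegral_mul_const _ (by fun_prop), ← ofReal_integral_eq_lintegral_ofReal
            (integrableOn_Ioi_rpow_of_lt (by linarith) ha0p)
            ((ae_restrict_mem measurableSet_Ioi).mono fun a (ha : a0 < a) =>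
              Real.rpow_nonneg (ha0p.trans ha).le _),
            integral_Ioi_rpow_of_lt (by linarith) ha0p, ← ENNReal.ofReal_mul (by
              have : 0 ≤ a0 ^ (-p + 1) := by positivity
              rw [neg_div, ← div_neg]
              exact div_nonneg this (by linarith))]
          congr 1
          have : a0 ^ (-p + 1) = v ^ ((m : ℝ) / n) := by
            rw [ha0, ← Real.rpow_mul hv0.le]
            congr 1
            rw [hp]; field_simp; ring
          rw [this]
          have h1 : p - 1 ≠ 0 := by linarith
          have h2 : -p + 1 ≠ 0 := by intro h; apply h1; linarith
          field_simp
          ring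
  refine (add_le_add i1 i2).trans (le_of_eq ?_)
  rw [← ENNReal.ofReal_add (by positivity) (by
    have : 0 < p - 1 := by linarith
    positivity), hv', ENNReal.ofReal_rpow_of_pos hv0, ← ENNReal.ofReal_mul hC0.le]
  congr 1; ring

/-! ### O'Neil's inequality for Riesz potentials -/

theorem measurable_rieszK_left (n m : ℕ) (y : Euc n) : Measurable fun x => rieszK n m x y := by
  unfold rieszK
  fun_prop

/-- The Riesz potential `∫ ‖x - y‖ ^ (m - n) F(y) dy`. -/
def rieszP (n m : ℕ) (F : Euc n → ℝ) (x : Euc n) : ℝ≥0∞ :=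
  ∫⁻ y, rieszK n m x y * ENNReal.ofReal (F y)

theorem measurable_rieszP (n m : ℕ) {F : Euc n → ℝ} (hF : Measurable F) :
    Measurable (rieszP n m F) := by
  refine Measurable.lintegral_prod_right' (f := fun p : Euc n × Euc n =>
    rieszK n m p.1 p.2 * ENNReal.ofReal (F p.2)) ?_
  exact (measurable_rieszK n m).mul (hF.comp measurable_snd).ennreal_ofReal

/-- The minimum of the two natural bounds for the integral of the Riesz kernel over the product of a
set of measure `t` and a set of measure `M` (a superlevel set of the density), written as an integral
over `s < M`. -/
theorem min_le_lintegral_max {κ : ℝ} (h0 : 0 < κ) (h1 : κ < 1) {t : ℝ} (ht : 0 < t) (M : ℝ≥0∞) :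
    min (ENNReal.ofReal t * M ^ κ) (M * ENNReal.ofReal t ^ κ) ≤
      ENNReal.ofReal t * ∫⁻ s in Ioi (0 : ℝ), {s : ℝ | ENNReal.ofReal s < M}.indicator
        (fun s => ENNReal.ofReal (max t s ^ (κ - 1))) s := by
  have hfin : ∀ r : ℝ, 0 < r → ENNReal.ofReal r ≤ M → ENNReal.ofReal (r * max t r ^ (κ - 1)) ≤
      ∫⁻ s in Ioi (0 : ℝ), {s : ℝ | ENNReal.ofReal s < M}.indicator
        (fun s => ENNReal.ofReal (max t s ^ (κ - 1))) s := by
    intro r hr hrM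
    have hm : 0 < max t r := lt_max_of_lt_left ht
    calc ENNReal.ofReal (r * max t r ^ (κ - 1))
        = ∫⁻ s in Ioo 0 r, ENNReal.ofReal (max t r ^ (κ - 1)) := by
          rw [setLIntegral_const, Real.volume_Ioo, sub_zero, ← ENNReal.ofReal_mul (by positivity),
            mul_comm]
      _ ≤ ∫⁻ s in Ioo 0 r, {s : ℝ | ENNReal.ofReal s < M}.indicator
        (fun s => ENNReal.ofReal (max t s ^ (κ - 1))) s := by
          refine setLIntegral_mono' measurableSet_Ioo fun s hs => ?_
          rw [indicator_of_mem (show s ∈ {s : ℝ | ENNReal.ofReal s < M} from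
            ((ENNReal.ofReal_lt_ofReal_iff hr).2 hs.2).trans_le hrM)]
          refine ENNReal.ofReal_le_ofReal (Real.rpow_le_rpow_of_nonpos (lt_max_of_lt_left ht)
            (max_le_max le_rfl hs.2.le) (by linarith))
      _ ≤ _ := lintegral_mono_set fun s hs => hs.1
  by_cases hMt : M = ⊤
  · have : (∫⁻ s in Ioi (0 : ℝ), {s : ℝ | ENNReal.ofReal s < M}.indicator
        (fun s => ENNReal.ofReal (max t s ^ (κ - 1))) s) = ⊤ := by
      refine ENNReal.eq_top_of_forall_nnreal_le fun r => ?_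
      set N : ℝ := max t ((r : ℝ) ^ (1 / κ)) with hN
      have hN0 : 0 < N := lt_max_of_lt_left ht
      refine le_trans ?_ (hfin N hN0 (by rw [hMt]; exact le_top))
      rw [← ENNReal.ofReal_coe_nnreal]
      refine ENNReal.ofReal_le_ofReal ?_
      rw [max_eq_right (le_max_left _ _)]
      have e : N * N ^ (κ - 1) = N ^ κ := by
        nth_rewrite 1 [← Real.rpow_one N]
        rw [← Real.rpow_add hN0]; congr 1; ring
      rw [e]
      calc (r : ℝ) = ((r : ℝ) ^ (1 / κ)) ^ κ := by
            rw [← Real.rpow_mul (NNReal.coe_nonneg r), one_div_mul_cancel h0.ne', Real.rpow_one]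
        _ ≤ N ^ κ := Real.rpow_le_rpow (Real.rpow_nonneg (NNReal.coe_nonneg r) _) (le_max_right _ _) h0.le
    rw [this, ENNReal.mul_top (ENNReal.ofReal_pos.2 ht).ne']
    exact le_top
  · obtain ⟨r, hr, rfl⟩ : ∃ r : ℝ, 0 ≤ r ∧ M = ENNReal.ofReal r :=
      ⟨M.toReal, ENNReal.toReal_nonneg, (ENNReal.ofReal_toReal hMt).symm⟩
    rcases hr.eq_or_lt with h | hr0
    · rw [← h]; simp
    have := hfin r hr0 le_rfl
    refine le_trans ?_ (mul_le_mul_right this _)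
    rw [ENNReal.ofReal_rpow_of_pos hr0, ENNReal.ofReal_rpow_of_pos ht, ← ENNReal.ofReal_mul ht.le,
      ← ENNReal.ofReal_mul ht.le, ← ENNReal.ofReal_mul hr]
    have e : ∀ x : ℝ, 0 < x → x * x ^ (κ - 1) = x ^ κ := by
      intro x hx
      nth_rewrite 1 [← Real.rpow_one x]
      rw [← Real.rpow_add hx]; congr 1; ring
    rcases le_total t r with htr | htr
    · refine (min_le_left _ _).trans (ENNReal.ofReal_le_ofReal ?_)
      rw [max_eq_right htr, e r hr0]
    · refine (min_le_right _ _).trans (ENNReal.ofReal_le_ofReal (le_of_eq ?_))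
      rw [max_eq_left htr, ← e t ht]; ring

/-- Layer cake for the rearrangement: the heights whose superlevel sets exceed `s` in measure make up
an interval of length at most `F*(s)`. -/
theorem volume_lt_measure_le_rearr {α : Type*} [MeasurableSpace α] {μ : Measure α} {F : α → ℝ}
    (hF0 : ∀ x, 0 ≤ F x) (s : ℝ) :
    volume {a : ℝ | 0 < a ∧ ENNReal.ofReal s < μ {x | a < F x}} ≤ rearr μ F s := by
  by_cases ht : rearr μ F s = ⊤
  · rw [ht]; exact le_top
  have : {a : ℝ | 0 < a ∧ ENNReal.ofReal s < μ {x | a < F x}} ⊆ Ioc 0 (rearr μ F s).toReal := by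
    rintro a ⟨ha, hs⟩
    refine ⟨ha, ?_⟩
    rw [← ENNReal.ofReal_le_iff_le_toReal ht]
    refine le_rearrE_of_lt_measure (hs.trans_le (measure_mono fun x (hx : a < F x) => ?_))
    rw [mem_ofPred_eq, abs_of_nonneg (hF0 x)]
    exact (ENNReal.ofReal_lt_ofReal_iff (ha.trans hx)).2 hx
  refine (measure_mono this).trans ?_
  rw [Real.volume_Ioc, sub_zero, ENNReal.ofReal_toReal ht]

/-- O'Neil's inequality in integrated form: the mean of a Riesz potential over a set of measure
`t` is controlled by a one-dimensional integral of the rearrangement. -/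
theorem setLIntegral_rieszP_le {n m : ℕ} (hm : 0 < m) (hmn : m < n) :
    ∃ C : ℝ, 0 < C ∧ ∀ F : Euc n → ℝ, Measurable F → (∀ x, 0 ≤ F x) →
      ∀ (S : Set (Euc n)) (t : ℝ), 0 < t → volume S = ENNReal.ofReal t →
      ∫⁻ x in S, rieszP n m F x ≤ ENNReal.ofReal C * (ENNReal.ofReal t *
        ∫⁻ s in Ioi (0 : ℝ), ENNReal.ofReal (max t s ^ ((m : ℝ) / n - 1)) * rearr volume F s) := by
  obtain ⟨C, hC, hb⟩ := rieszK_set_bound hm hmn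
  have hm' : (0 : ℝ) < m := by exact_mod_cast hm
  have hmn' : (m : ℝ) < n := by exact_mod_cast hmn
  have hκ0 : 0 < (m : ℝ) / n := div_pos hm' (hm'.trans hmn')
  have hκ1 : (m : ℝ) / n < 1 := (div_lt_one (hm'.trans hmn')).2 hmn'
  set κ := (m : ℝ) / n with hκ
  refine ⟨C, hC, fun F hF hF0 S t ht hS => ?_⟩
  have mK := measurable_rieszK n m
  set k : Euc n → ℝ≥0∞ := fun y => ∫⁻ x in S, rieszK n m x y with hk
  have mk : Measurable k := Measurable.lintegral_prod_left' mK
  have hsw : ∀ A : Set (Euc n), ∫⁻ y in A, k y = ∫⁻ x in S, ∫⁻ y in A, rieszK n m x y := by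
    intro A
    exact lintegral_lintegral_swap (μ := volume.restrict A) (ν := volume.restrict S)
      (f := fun y x => rieszK n m x y) (mK.comp measurable_swap).aemeasurable
  -- Both bounds come from the estimate of the kernel over a set, applied in either variable.
  have hkA : ∀ A : Set (Euc n), ∫⁻ y in A, k y ≤
      ENNReal.ofReal C * min (ENNReal.ofReal t * volume A ^ κ)
        (volume A * ENNReal.ofReal t ^ κ) := by
    intro A
    rw [mul_min]
    refine le_min ?_ ?_
    · rw [hsw]
      calc _ ≤ ∫⁻ x in S, ENNReal.ofReal C * volume A ^ κ := lintegral_mono fun x => hb A x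
        _ = _ := by rw [setLIntegral_const, hS]; ring
    · calc _ ≤ ∫⁻ y in A, ENNReal.ofReal C * volume S ^ κ := by
            refine lintegral_mono fun y => ?_
            simp only [hk]
            simp_rw [rieszK_comm n m _ y]
            exact hb S y
        _ = _ := by rw [setLIntegral_const, hS]; ring
  have e1 : ∫⁻ x in S, rieszP n m F x = ∫⁻ y, ENNReal.ofReal (F y) ∂(volume.withDensity k) := by
    rw [lintegral_withDensity_eq_lintegral_mul _ mk hF.ennreal_ofReal]
    unfold rieszP
    rw [lintegral_lintegral_swap (by
      exact ((mK).mul (hF.comp measurable_snd).ennreal_ofReal).aemeasurable)]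
    refine lintegral_congr fun y => ?_
    exact lintegral_mul_const (μ := volume.restrict S) (f := fun x => rieszK n m x y) _
      (measurable_rieszK_left n m y)
  have mM : Measurable fun a : ℝ => volume {x | a < F x} :=
    Antitone.measurable fun a b hab => measure_mono fun x hx => lt_of_le_of_lt hab hx
  have mset : MeasurableSet {p : ℝ × ℝ | ENNReal.ofReal p.2 < volume {x | p.1 < F x}} :=
    measurableSet_lt measurable_snd.ennreal_ofReal (mM.comp measurable_fst)
  have mr : Measurable fun s : ℝ => ENNReal.ofReal (max t s ^ (κ - 1)) :=
    ((measurable_const.max measurable_id).pow_const _).ennreal_ofReal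
  have mj : Measurable fun p : ℝ × ℝ =>
      {p : ℝ × ℝ | ENNReal.ofReal p.2 < volume {x | p.1 < F x}}.indicator
        (fun p => ENNReal.ofReal (max t p.2 ^ (κ - 1))) p :=
    (mr.comp measurable_snd).indicator mset
  rw [e1, lintegral_eq_lintegral_meas_lt _ (ae_of_all _ hF0) hF.aemeasurable]
  calc ∫⁻ a in Ioi (0 : ℝ), (volume.withDensity k) {x | a < F x}
      ≤ ∫⁻ a in Ioi (0 : ℝ), ENNReal.ofReal C * (ENNReal.ofReal t *
        ∫⁻ s in Ioi (0 : ℝ), {p : ℝ × ℝ | ENNReal.ofReal p.2 < volume {x | p.1 < F x}}.indicator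
        (fun p => ENNReal.ofReal (max t p.2 ^ (κ - 1))) (a, s)) := by
        refine lintegral_mono fun a => ?_
        rw [withDensity_apply _ (measurableSet_lt measurable_const hF)]
        refine (hkA _).trans ?_
        gcongr
        exact min_le_lintegral_max hκ0 hκ1 ht _
    _ = ENNReal.ofReal C * (ENNReal.ofReal t * ∫⁻ a in Ioi (0 : ℝ),
        ∫⁻ s in Ioi (0 : ℝ), {p : ℝ × ℝ | ENNReal.ofReal p.2 < volume {x | p.1 < F x}}.indicator
        (fun p => ENNReal.ofReal (max t p.2 ^ (κ - 1))) (a, s)) := by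
        have h := Measurable.lintegral_prod_right' (ν := volume.restrict (Ioi (0 : ℝ))) mj
        rw [lintegral_const_mul _ (h.const_mul _), lintegral_const_mul _ h]
    _ ≤ _ := by
        refine mul_le_mul_right (mul_le_mul_right ?_ _) _
        rw [lintegral_lintegral_swap mj.aemeasurable]
        refine lintegral_mono fun s => ?_
        calc _ = ∫⁻ a in Ioi (0 : ℝ), {a : ℝ | ENNReal.ofReal s < volume {x | a < F x}}.indicator
              (fun _ => ENNReal.ofReal (max t s ^ (κ - 1))) a := rfl
          _ = ENNReal.ofReal (max t s ^ (κ - 1)) *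
              volume {a : ℝ | 0 < a ∧ ENNReal.ofReal s < volume {x | a < F x}} := by
            have ms : MeasurableSet {a : ℝ | ENNReal.ofReal s < volume {x | a < F x}} :=
              measurableSet_lt measurable_const mM
            rw [lintegral_indicator_const ms, Measure.restrict_apply ms]
            congr 2
            ext a
            exact and_comm
          _ ≤ _ := by
            gcongr
            exact volume_lt_measure_le_rearr hF0 s

/-- O'Neil's inequality for the Riesz potential of order `m`. -/
theorem rearrE_rieszP_le {n m : ℕ} (hm : 0 < m) (hmn : m < n) :
    ∃ C : ℝ, 0 < C ∧ ∀ F : Euc n → ℝ, Measurable F → (∀ x, 0 ≤ F x) → ∀ t : ℝ, 0 < t →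
      rearrE volume (rieszP n m F) t ≤ ENNReal.ofReal C *
        ∫⁻ s in Ioi (0 : ℝ), ENNReal.ofReal (max t s ^ ((m : ℝ) / n - 1)) * rearr volume F s := by
  obtain ⟨C, hC, h⟩ := setLIntegral_rieszP_le hm hmn
  have hm' : (0 : ℝ) < m := by exact_mod_cast hm
  have hmn' : (m : ℝ) < n := by exact_mod_cast hmn
  have hκ1 : (m : ℝ) / n < 1 := (div_lt_one (hm'.trans hmn')).2 hmn'
  refine ⟨C, hC, fun F hF hF0 t ht => le_of_forall_lt_imp_le_of_dense fun l hl => ?_⟩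
  have h1 := lt_measure_of_lt_rearrE hl
  have mU : MeasurableSet {x | l < rieszP n m F x} :=
    measurableSet_lt measurable_const (measurable_rieszP n m hF)
  have hU : {x | l < rieszP n m F x} =
      ⋃ j : ℕ, ({x | l < rieszP n m F x} ∩ Metric.ball (0 : Euc n) j) := by
    rw [← inter_iUnion, Metric.iUnion_ball_nat, inter_univ]
  have hmono : Monotone fun j : ℕ => {x | l < rieszP n m F x} ∩ Metric.ball (0 : Euc n) j :=
    fun i j hij => inter_subset_inter_right _ (Metric.ball_subset_ball (by exact_mod_cast hij))
  -- The superlevel set may have infinite measure; a bounded part of it with measure `T > t` suffices.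
  rw [hU, hmono.measure_iUnion, lt_iSup_iff] at h1
  obtain ⟨j, hj⟩ := h1
  set S := {x | l < rieszP n m F x} ∩ Metric.ball (0 : Euc n) j with hS
  have hSt : volume S ≠ ⊤ :=
    ((measure_mono inter_subset_right).trans_lt measure_ball_lt_top).ne
  set T := (volume S).toReal with hT
  have hST : volume S = ENNReal.ofReal T := (ENNReal.ofReal_toReal hSt).symm
  rw [hST] at hj
  have htT : t < T := by
    by_contra! hc
    exact absurd (ENNReal.ofReal_le_ofReal hc) (not_le.2 hj)
  have hT0 : 0 < T := ht.trans htT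
  have h2 := h F hF hF0 S T hT0 hST
  have h3 : ENNReal.ofReal T * l ≤ ∫⁻ x in S, rieszP n m F x := by
    rw [← hST, mul_comm, ← setLIntegral_const]
    exact setLIntegral_mono' (mU.inter measurableSet_ball) fun x hx => hx.1.le
  -- The mean over a larger set is controlled by a smaller kernel.
  have h4 : ∫⁻ s in Ioi (0 : ℝ), ENNReal.ofReal (max T s ^ ((m : ℝ) / n - 1)) * rearr volume F s ≤
      ∫⁻ s in Ioi (0 : ℝ), ENNReal.ofReal (max t s ^ ((m : ℝ) / n - 1)) * rearr volume F s := by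
    refine lintegral_mono fun s => ?_
    gcongr ENNReal.ofReal ?_ * _
    exact Real.rpow_le_rpow_of_nonpos (lt_max_of_lt_left ht) (max_le_max htT.le le_rfl)
      (by linarith)
  have h5 : ENNReal.ofReal T * l ≤ ENNReal.ofReal T * (ENNReal.ofReal C *
      ∫⁻ s in Ioi (0 : ℝ), ENNReal.ofReal (max t s ^ ((m : ℝ) / n - 1)) * rearr volume F s) := by
    refine (h3.trans h2).trans ?_
    rw [mul_left_comm]
    gcongr
  exact (ENNReal.mul_le_mul_iff_right (ENNReal.ofReal_pos.2 hT0).ne' ENNReal.ofReal_ne_top).1 h5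

/-! ### Riesz potentials between Lorentz–Zygmund spaces -/

/-- The Lorentz–Zygmund functional is an `L^q` norm on the half-line; for `q = ∞` this uses
`1 / q.toReal = 0`. -/
theorem lzNorm_eq_eLpNorm {α : Type*} [MeasurableSpace α] (μ : Measure α) (pinv : ℝ) {q : ℝ≥0∞}
    (hq : 1 < q) (a0 ai b0 bi : ℝ) (f : α → ℝ) :
    lzNorm μ pinv q a0 ai b0 bi f =
      eLpNorm (fun t => ENNReal.ofReal (t ^ (pinv - 1 / q.toReal) * ellA a0 ai t *
        ellellB b0 bi t) * rearr μ f t) q (volume.restrict (Ioi (0 : ℝ))) := by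
  unfold lzNorm
  split_ifs with h
  · subst h
    rw [eLpNorm_exponent_top]
    simp [eLpNormEssSup]
  · rw [eLpNorm_eq_lintegral_rpow_enorm_toReal (zero_lt_one.trans hq).ne' h]
    simp only [enorm_eq_self]

theorem ae_lt_top_of_eLpNorm_lt_top {α : Type*} [MeasurableSpace α] {μ : Measure α} {q : ℝ≥0∞}
    (hq : 1 < q) {f : α → ℝ≥0∞} (hf : Measurable f) (h : eLpNorm f q μ < ⊤) :
    ∀ᵐ x ∂μ, f x < ⊤ := by
  by_cases hqt : q = ⊤
  · subst hqt
    rw [eLpNorm_exponent_top] at h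
    filter_upwards [ae_le_eLpNormEssSup (f := f) (μ := μ)] with x hx
    exact lt_of_le_of_lt hx h
  · have hr : 0 < q.toReal := ENNReal.toReal_pos (zero_lt_one.trans hq).ne' hqt
    rw [eLpNorm_eq_lintegral_rpow_enorm_toReal (zero_lt_one.trans hq).ne' hqt] at h
    simp only [enorm_eq_self] at h
    have h2 : ∫⁻ x, f x ^ q.toReal ∂μ < ⊤ := by
      by_contra! hc
      rw [top_le_iff.1 hc, ENNReal.top_rpow_of_pos (by positivity)] at h
      exact lt_irrefl _ h
    filter_upwards [ae_lt_top (hf.pow_const _) h2.ne] with x hx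
    by_contra! hc
    rw [top_le_iff.1 hc, ENNReal.top_rpow_of_pos hr] at hx
    exact lt_irrefl _ hx

theorem measurable_rearr {α : Type*} [MeasurableSpace α] (μ : Measure α) (f : α → ℝ) :
    Measurable (rearr μ f) := (rearrE_antitone μ _).measurable

/-- Monotonicity of the `L^q` norm up to a constant, without measurability assumptions. -/
theorem const_mul_eLpNorm_le {α : Type*} [MeasurableSpace α] {μ : Measure α} {q : ℝ≥0∞}
    (hq : 1 < q) {f g : α → ℝ≥0∞} {c : ℝ} (hc : 0 < c) (h : ∀ᵐ x ∂μ, f x ≤ ENNReal.ofReal c * g x) :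
    eLpNorm f q μ ≤ ENNReal.ofReal c * eLpNorm g q μ := by
  lift c to NNReal using hc.le
  rw [ENNReal.ofReal_coe_nnreal] at h ⊢
  refine eLpNorm_le_nnreal_smul_eLpNorm_of_ae_le_mul' ?_ q
  simpa using h

/-- Riesz potentials of order `m` map the Lorentz–Zygmund space of the gradient to the limiting
one, and are locally integrable there. -/
theorem rieszP_lz {n m : ℕ} (hm : 0 < m) (hmn : m < n) {q : ℝ≥0∞} (hq : 1 < q) {αi : ℝ}
    (hα : 1 - 1 / q.toReal < αi) :
    ∃ C : ℝ, 0 < C ∧ ∀ F : Euc n → ℝ, Measurable F → (∀ x, 0 ≤ F x) →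
      lzNorm volume ((m : ℝ) / n) q (1 - 1 / q.toReal) αi 0 0 F < ⊤ →
      (∀ R : ℝ, 0 < R → ∫⁻ x in Metric.ball 0 R, rieszP n m F x < ⊤) ∧
      eLpNorm (fun t => ENNReal.ofReal (t ^ (0 - 1 / q.toReal) *
          ellA (-(1 / q.toReal)) (αi - 1) t * ellellB (-1) 0 t) *
          rearrE volume (rieszP n m F) t) q (volume.restrict (Ioi 0)) ≤
        ENNReal.ofReal C * lzNorm volume ((m : ℝ) / n) q (1 - 1 / q.toReal) αi 0 0 F := by
  have hm' : (0 : ℝ) < m := by exact_mod_cast hm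
  have hmn' : (m : ℝ) < n := by exact_mod_cast hmn
  have hκ1 : (m : ℝ) / n < 1 := (div_lt_one (hm'.trans hmn')).2 hmn'
  obtain ⟨C1, hC1, h1⟩ := hardy_main hq hκ1 hα
  obtain ⟨C2, hC2, h2⟩ := rearrE_rieszP_le hm hmn
  obtain ⟨C3, hC3, h3⟩ := setLIntegral_rieszP_le hm hmn
  refine ⟨C2 * C1, by positivity, fun F hF hF0 hlz => ?_⟩
  have hh := h1 _ (measurable_rearr volume F)
  rw [← lzNorm_eq_eLpNorm volume _ hq] at hh
  set κ := (m : ℝ) / n with hκ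
  set H : ℝ → ℝ≥0∞ := fun t => ∫⁻ s in Ioi (0 : ℝ), ENNReal.ofReal (max t s ^ (κ - 1)) *
    rearr volume F s with hH
  set W : ℝ → ℝ := fun t => t ^ (0 - 1 / q.toReal) *
          ellA (-(1 / q.toReal)) (αi - 1) t * ellellB (-1) 0 t with hW
  have hWp : ∀ t, 0 < t → 0 < W t := by
    intro t ht
    have := ellA_pos (a := -(1 / q.toReal)) (b := αi - 1) ht
    have := ellellB_pos (a := -1) (b := 0) ht
    simp only [hW]; positivity
  have mW : Measurable W := by
    have := measurable_ellA (-(1 / q.toReal)) (αi - 1)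
    have := measurable_ellellB (-1) 0
    simp only [hW]; fun_prop
  have mH : Measurable H := by
    refine Measurable.lintegral_prod_right' (ν := volume.restrict (Ioi (0 : ℝ)))
      (f := fun p : ℝ × ℝ => ENNReal.ofReal (max p.1 p.2 ^ (κ - 1)) * rearr volume F p.2) ?_
    exact ((measurable_fst.max measurable_snd).pow_const _).ennreal_ofReal.mul
      ((measurable_rearr volume F).comp measurable_snd)
  have hanti : ∀ s t, 0 < s → s ≤ t → H t ≤ H s := by
    intro a b ha hab
    refine lintegral_mono fun s => ?_
    gcongr ENNReal.ofReal ?_ * _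
    exact Real.rpow_le_rpow_of_nonpos (lt_max_of_lt_left ha) (max_le_max hab le_rfl)
      (by linarith)
  refine ⟨fun R hR => ?_, ?_⟩
  · have hfin : eLpNorm (fun t => ENNReal.ofReal (W t) * H t) q (volume.restrict (Ioi 0)) < ⊤ :=
      hh.trans_lt (ENNReal.mul_lt_top ENNReal.ofReal_lt_top hlz)
    have hae := ae_lt_top_of_eLpNorm_lt_top hq (mW.ennreal_ofReal.mul mH) hfin
    set T := (volume (Metric.ball (0 : Euc n) R)).toReal with hT
    have hT0 : 0 < T := ENNReal.toReal_pos (Metric.measure_ball_pos _ _ hR).ne'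
      measure_ball_lt_top.ne
    -- `H` is nonincreasing and finite somewhere in `(0, T)`.
    have hHT : H T < ⊤ := by
      obtain ⟨t, ht, htT⟩ : ∃ t, (0 < t → ENNReal.ofReal (W t) * H t < ⊤) ∧ t ∈ Ioo 0 T := by
        by_contra! hc
        have h0 : volume (Ioo 0 T) = 0 := by
          refine measure_mono_null ?_ ((ae_restrict_iff' measurableSet_Ioi).1 hae)
          intro t ht hcon
          exact hc t hcon ht
        rw [Real.volume_Ioo] at h0
        simp at h0; linarith
      have hH : H t < ⊤ := by
        by_contra! hc
        have := ht htT.1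
        rw [top_le_iff.1 hc, ENNReal.mul_top (ENNReal.ofReal_pos.2 (hWp t htT.1)).ne'] at this
        exact lt_irrefl _ this
      exact (hanti t T htT.1 htT.2.le).trans_lt hH
    refine (h3 F hF hF0 _ T hT0 (ENNReal.ofReal_toReal measure_ball_lt_top.ne).symm).trans_lt ?_
    exact ENNReal.mul_lt_top ENNReal.ofReal_lt_top (ENNReal.mul_lt_top ENNReal.ofReal_lt_top hHT)
  · have : eLpNorm (fun t => ENNReal.ofReal (W t) * rearrE volume (rieszP n m F) t) q
        (volume.restrict (Ioi 0)) ≤ ENNReal.ofReal C2 *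
        eLpNorm (fun t => ENNReal.ofReal (W t) * H t) q (volume.restrict (Ioi 0)) := by
      refine const_mul_eLpNorm_le hq hC2 ?_
      filter_upwards [ae_restrict_mem measurableSet_Ioi] with t (ht : 0 < t)
      rw [mul_left_comm]
      gcongr
      exact h2 F hF hF0 t ht
    refine this.trans ?_
    rw [ENNReal.ofReal_mul hC2.le, mul_assoc]
    gcongr

/-! ### Uniqueness of the polynomial -/

theorem eval_smul_of_isHomogeneous {n k : ℕ} {p : MvPolynomial (Fin n) ℝ} (hp : p.IsHomogeneous k)
    (r : ℝ) (x : Fin n → ℝ) :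
    MvPolynomial.eval (fun i => r * x i) p = r ^ k * MvPolynomial.eval x p := by
  rw [MvPolynomial.eval_eq', MvPolynomial.eval_eq', Finset.mul_sum]
  refine Finset.sum_congr rfl fun d hd => ?_
  have h := hp (MvPolynomial.mem_support_iff.1 hd)
  rw [Finsupp.weight_apply, Finsupp.sum_fintype _ _ (by simp)] at h
  simp only [Pi.one_apply, smul_eq_mul, mul_one] at h
  simp only [mul_pow, Finset.prod_mul_distrib, Finset.prod_pow_eq_pow_sum, h]
  ring

theorem continuous_eval_euc {n : ℕ} (p : MvPolynomial (Fin n) ℝ) :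
    Continuous fun x : Euc n => MvPolynomial.eval (fun i => x i) p := by
  have h1 := MvPolynomial.continuous_eval p
  exact h1.comp (by fun_prop)

theorem exists_ball_lt_of_continuous {X : Type*} [PseudoMetricSpace X] {f : X → ℝ}
    (hf : Continuous f) {x : X} {c : ℝ} (h : c < f x) :
    ∃ ε, 0 < ε ∧ ∀ y ∈ Metric.ball x ε, c < f y :=
  Metric.eventually_nhds_iff_ball.1 (hf.continuousAt.eventually (lt_mem_nhds h))

/-- A nonzero polynomial exceeds some positive constant on a set of infinite measure: near a ray
on which the top homogeneous part does not vanish it is bounded below. -/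
theorem polynomial_volume_eq_top {n : ℕ} (hn : 0 < n) {p : MvPolynomial (Fin n) ℝ} (hp : p ≠ 0) :
    ∃ δ : ℝ, 0 < δ ∧ volume {y : Euc n | δ < |MvPolynomial.eval (fun i => y i) p|} = ⊤ := by
  classical
  set d := p.totalDegree with hd
  obtain ⟨e, he, hed⟩ := Finset.exists_mem_eq_sup p.support (MvPolynomial.support_nonempty.2 hp)
    fun s => s.sum fun _ e => e
  have hed' : Finsupp.degree e = d := by
    rw [hd, MvPolynomial.totalDegree, hed]; rfl
  have hpd : MvPolynomial.homogeneousComponent d p ≠ 0 := by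
    intro h0
    have h1 := MvPolynomial.coeff_homogeneousComponent (φ := p) (n := d) e
    rw [h0, if_pos hed', MvPolynomial.coeff_zero] at h1
    exact (MvPolynomial.mem_support_iff.1 he) h1.symm
  obtain ⟨x1, hx1⟩ : ∃ x, MvPolynomial.eval x (MvPolynomial.homogeneousComponent d p) ≠ 0 := by
    by_contra! hc
    exact hpd (MvPolynomial.funext fun x => by rw [hc, map_zero])
  set x0 : Euc n := WithLp.toLp 2 x1 with hx0
  -- `F (r, r • y) = r ^ d * p y`, a homogenization of `p`; it is continuous at `(0, x0)`, where its
  -- value is the top homogeneous part.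
  set F : ℝ × Euc n → ℝ := fun z => ∑ k ∈ Finset.range (d + 1),
    z.1 ^ (d - k) * MvPolynomial.eval (fun i => z.2 i) (MvPolynomial.homogeneousComponent k p)
    with hF
  have cF : Continuous F := by
    refine continuous_finsetSum _ fun k _ => ?_
    exact (continuous_fst.pow _).mul ((continuous_eval_euc _).comp continuous_snd)
  have F0 : F (0, x0) = MvPolynomial.eval x1 (MvPolynomial.homogeneousComponent d p) := by
    rw [hF]
    dsimp only
    rw [Finset.sum_range_succ, Finset.sum_eq_zero, zero_add, Nat.sub_self, pow_zero, one_mul]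
    intro k hk
    have : d - k ≠ 0 := by have := Finset.mem_range.1 hk; omega
    rw [zero_pow this, zero_mul]
  set δ := |F (0, x0)| / 2 with hδ
  have hδ0 : 0 < δ := by
    have : 0 < |F (0, x0)| := by rw [F0]; exact abs_pos.2 hx1
    exact half_pos this
  refine ⟨δ, hδ0, ?_⟩
  obtain ⟨ε, hε, hball⟩ := exists_ball_lt_of_continuous cF.abs
    (show δ < |F (0, x0)| by rw [hδ]; linarith)
  have hscale : ∀ r : ℝ, 0 < r → r ≤ 1 → r < ε →
      Metric.ball (r⁻¹ • x0) (ε / r) ⊆ {y : Euc n | δ < |MvPolynomial.eval (fun i => y i) p|} := by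
    intro r hr hr1 hrε y hy
    have hz : (r, r • y) ∈ Metric.ball ((0 : ℝ), x0) ε := by
      rw [Metric.mem_ball, Prod.dist_eq, max_lt_iff]
      refine ⟨by simpa [abs_of_pos hr] using hrε, ?_⟩
      have h1 : x0 = r • (r⁻¹ • x0) := by rw [smul_smul, mul_inv_cancel₀ hr.ne', one_smul]
      change dist (r • y) x0 < ε
      rw [h1, dist_smul₀, Real.norm_of_nonneg hr.le]
      rw [Metric.mem_ball, lt_div_iff₀ hr] at hy
      linarith
    have h2 := hball _ hz
    have h3 : F (r, r • y) = r ^ d * MvPolynomial.eval (fun i => y i) p := by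
      simp only [hF]
      conv_rhs => rw [← MvPolynomial.sum_homogeneousComponent p, map_sum, Finset.mul_sum]
      refine Finset.sum_congr rfl fun k hk => ?_
      have hkd : k ≤ d := by have := Finset.mem_range.1 hk; omega
      have h4 := eval_smul_of_isHomogeneous
        (MvPolynomial.homogeneousComponent_isHomogeneous (n := k) (φ := p)) r (fun i => y i)
      have h5 : (fun i => (r • y) i) = fun i => r * y i := by ext i; simp
      rw [h5, h4, ← mul_assoc, ← pow_add, Nat.sub_add_cancel hkd]
    rw [h3, abs_mul, abs_of_nonneg (by positivity)] at h2
    refine h2.trans_le ?_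
    have : r ^ d ≤ 1 := pow_le_one₀ hr.le hr1
    nlinarith [abs_nonneg (MvPolynomial.eval (fun i => y i) p)]
  refine ENNReal.eq_top_of_forall_nnreal_le fun N => ?_
  haveI : Nonempty (Fin n) := ⟨⟨0, hn⟩⟩
  set ω := (volume (Metric.ball (0 : Euc n) 1)).toReal with hω
  have hω' : volume (Metric.ball (0 : Euc n) 1) = ENNReal.ofReal ω :=
    (ENNReal.ofReal_toReal measure_ball_lt_top.ne).symm
  have hω0 : 0 < ω := ENNReal.toReal_pos (Metric.measure_ball_pos _ _ one_pos).ne'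
    measure_ball_lt_top.ne
  have ht : Tendsto (fun r : ℝ => (ε * r⁻¹) ^ n * ω) (nhdsWithin 0 (Ioi 0)) atTop :=
    ((tendsto_pow_atTop hn.ne').comp
      (tendsto_inv_nhdsGT_zero.const_mul_atTop hε)).atTop_mul_const hω0
  have hmem : ∀ᶠ r : ℝ in nhdsWithin 0 (Ioi 0), r ∈ Ioo 0 (min 1 ε) :=
    Ioo_mem_nhdsGT (lt_min one_pos hε)
  obtain ⟨r, hrN, hr0, hr1⟩ := ((ht.eventually_ge_atTop (N : ℝ)).and hmem).exists
  refine le_trans ?_ (measure_mono (hscale r hr0 (hr1.trans_le (min_le_left _ _)).le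
    (hr1.trans_le (min_le_right _ _))))
  rw [Measure.addHaar_ball _ _ (by positivity), finrank_euclideanSpace_fin, hω',
    ← ENNReal.ofReal_mul (by positivity), ← ENNReal.ofReal_coe_nnreal, div_eq_mul_inv]
  exact ENNReal.ofReal_le_ofReal hrN

/-- The integral of `1 / (t (1 + log t))` diverges at infinity. -/
theorem lintegral_inv_mul_log_eq_top :
    ∫⁻ t in Ioi (1 : ℝ), ENNReal.ofReal (t⁻¹ * (1 + Real.log t)⁻¹) = ⊤ := by
  by_contra hc
  have hd : ∀ t : ℝ, 1 < t → HasDerivAt (fun t => Real.log (1 + Real.log t))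
      (t⁻¹ / (1 + Real.log t)) t := by
    intro t ht
    have := Real.log_pos ht
    exact ((Real.hasDerivAt_log (by linarith)).const_add 1).log (by linarith)
  refine not_integrableOn_of_tendsto_norm_atTop_of_deriv_isBigO_filter
    (f := fun t : ℝ => Real.log (1 + Real.log t)) (g := fun t : ℝ => t⁻¹ * (1 + Real.log t)⁻¹)
    atTop (Ioi_mem_atTop 1) ?_ ?_ ?_ ⟨?_, ?_⟩
  · filter_upwards [Ioi_mem_atTop 1] with t ht
    exact (hd t ht).differentiableAt
  · exact tendsto_norm_atTop_atTop.comp (Real.tendsto_log_atTop.comp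
      (tendsto_atTop_add_const_left _ _ Real.tendsto_log_atTop))
  · refine Asymptotics.IsBigO.of_bound 1 ?_
    filter_upwards [Ioi_mem_atTop 1] with t ht
    rw [(hd t ht).deriv, one_mul, div_eq_mul_inv]
  · exact Measurable.aestronglyMeasurable (by fun_prop)
  · rw [hasFiniteIntegral_iff_norm]
    refine lt_of_le_of_lt (le_of_eq ?_) (lt_top_iff_ne_top.2 hc)
    refine setLIntegral_congr_fun measurableSet_Ioi fun t (ht : 1 < t) => ?_
    have := Real.log_pos ht
    rw [Real.norm_of_nonneg (by positivity)]

/-- The essential supremum over the half-line bounds the function at arbitrarily large points. -/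
theorem exists_ge_le_essSup (f : ℝ → ℝ≥0∞) (T : ℝ) :
    ∃ t, T ≤ t ∧ (0 < t → f t ≤ essSup f (volume.restrict (Ioi (0 : ℝ)))) := by
  have hae := (ae_restrict_iff' measurableSet_Ioi).1 (ENNReal.ae_le_essSup
    (μ := volume.restrict (Ioi (0 : ℝ))) f)
  by_contra! hcon
  have h0 : volume (Ici T) = 0 := by
    refine measure_mono_null ?_ hae
    intro t (ht : T ≤ t) hb
    exact absurd (hb (hcon t ht).1) (not_le.2 (hcon t ht).2)
  rw [Real.volume_Ici] at h0
  exact ENNReal.top_ne_zero h0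

/-- A function of finite limiting Lorentz–Zygmund norm has superlevel sets of finite measure.
Otherwise `f* ≥ c` on the half-line, while the weight does not belong to `L^q` near infinity because
`αi - 1 > -1/q`. -/
theorem volume_lt_top_of_lzNorm {α : Type*} [MeasurableSpace α] {μ : Measure α} {q : ℝ≥0∞}
    (hq : 1 < q) {αi : ℝ} (hα : 1 - 1 / q.toReal < αi) {f : α → ℝ}
    (hf : lzNorm μ 0 q (-(1 / q.toReal)) (αi - 1) (-1) 0 f < ⊤) {c : ℝ} (hc : 0 < c) :
    μ {x | c < |f x|} < ⊤ := by
  by_contra! htop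
  have hr : ∀ t, ENNReal.ofReal c ≤ rearr μ f t := by
    intro t
    refine le_rearrE_of_lt_measure (lt_of_lt_of_le ENNReal.ofReal_lt_top (htop.trans ?_))
    refine measure_mono fun x (hx : c < |f x|) => ?_
    exact (ENNReal.ofReal_lt_ofReal_iff (hc.trans hx)).2 hx
  refine absurd hf (not_lt.2 (top_le_iff.2 ?_))
  unfold lzNorm
  split_ifs with hqt
  · subst hqt
    simp only [ENNReal.toReal_top, div_zero, sub_zero] at hα
    refine ENNReal.eq_top_of_forall_nnreal_le fun N => ?_
    have hw : Tendsto (fun t : ℝ => c * (1 + Real.log t) ^ (αi - 1)) atTop atTop :=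
      (((tendsto_rpow_atTop (by linarith)).comp
        (tendsto_atTop_add_const_left _ _ Real.tendsto_log_atTop))).const_mul_atTop hc
    obtain ⟨T, hT⟩ := ((hw.eventually_ge_atTop (N : ℝ)).and (Ioi_mem_atTop 1)).exists_forall_of_atTop
    obtain ⟨t, htT, ht⟩ := exists_ge_le_essSup (fun t => ENNReal.ofReal (t ^ (0 : ℝ) *
        ellA (-(1 / (⊤ : ℝ≥0∞).toReal)) (αi - 1) t * ellellB (-1) 0 t) * rearr μ f t) T
    obtain ⟨h1, h2 : 1 < t⟩ := hT t htT
    refine le_trans ?_ (ht (by linarith))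
    rw [← ENNReal.ofReal_coe_nnreal]
    refine le_trans (ENNReal.ofReal_le_ofReal h1) ?_
    rw [mul_comm c, ENNReal.ofReal_mul (Real.rpow_nonneg (by linarith [Real.log_pos h2]) _)]
    refine mul_le_mul' (le_of_eq ?_) (hr t)
    simp [ellA, ellellB, not_lt.2 h2.le]
  · have hr0 : 0 < q.toReal := ENNReal.toReal_pos (zero_lt_one.trans hq).ne' hqt
    set r := q.toReal with hrdef
    have hlow : ∫⁻ t in Ioi (1 : ℝ), ENNReal.ofReal (c ^ r) *
        ENNReal.ofReal (t⁻¹ * (1 + Real.log t)⁻¹) ≤ ∫⁻ t in Ioi (0 : ℝ),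
        (ENNReal.ofReal (t ^ (0 - 1 / r) * ellA (-(1 / r)) (αi - 1) t * ellellB (-1) 0 t) *
            rearr μ f t) ^ r := by
      refine le_trans (setLIntegral_mono' measurableSet_Ioi fun t (ht : 1 < t) => ?_)
        (lintegral_mono_set (Ioi_subset_Ioi zero_le_one))
      have hl := Real.log_pos ht
      have ht0 : 0 < t := by linarith
      have e1 : t⁻¹ * (1 + Real.log t)⁻¹ =
          (t ^ (0 - 1 / r) * (1 + Real.log t) ^ (-(1 / r))) ^ r := by
        rw [Real.mul_rpow (by positivity) (by positivity), ← Real.rpow_mul ht0.le,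
          ← Real.rpow_mul (by positivity)]
        have e2 : (0 - 1 / r) * r = -1 := by field_simp; ring
        have e3 : -(1 / r) * r = -1 := by field_simp
        rw [e2, e3, Real.rpow_neg_one, Real.rpow_neg_one]
      rw [e1, ← ENNReal.ofReal_rpow_of_pos hc, ← ENNReal.ofReal_rpow_of_nonneg (by positivity)
        hr0.le, ← ENNReal.mul_rpow_of_nonneg _ _ hr0.le, mul_comm]
      refine ENNReal.rpow_le_rpow (mul_le_mul' (ENNReal.ofReal_le_ofReal ?_) (hr t)) hr0.le
      simp only [ellA, ellellB, not_lt.2 ht.le, if_false, Real.rpow_zero, mul_one]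
      refine mul_le_mul_of_nonneg_left ?_ (by positivity)
      exact Real.rpow_le_rpow_of_exponent_le (by linarith) (by linarith)
    rw [lintegral_const_mul _ (by fun_prop), lintegral_inv_mul_log_eq_top, ENNReal.mul_top
      (ENNReal.ofReal_pos.2 (by positivity)).ne', top_le_iff] at hlow
    rw [hlow, ENNReal.top_rpow_of_pos (by positivity)]

/-- Two polynomials approximating `u` to finite limiting norm coincide: their difference has
superlevel sets of finite measure. -/
theorem polynomial_unique {n : ℕ} (hn : 0 < n) {q : ℝ≥0∞} (hq : 1 < q) {αi : ℝ}
    (hα : 1 - 1 / q.toReal < αi) {u : Euc n → ℝ} {P Q : MvPolynomial (Fin n) ℝ}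
    (hP : lzNorm volume 0 q (-(1 / q.toReal)) (αi - 1) (-1) 0
      (fun x : Euc n => u x - MvPolynomial.eval (fun i => x i) P) < ⊤)
    (hQ : lzNorm volume 0 q (-(1 / q.toReal)) (αi - 1) (-1) 0
      (fun x : Euc n => u x - MvPolynomial.eval (fun i => x i) Q) < ⊤) : Q = P := by
  by_contra hne
  obtain ⟨δ, hδ, htop⟩ := polynomial_volume_eq_top hn (sub_ne_zero.2 hne)
  have h1 := volume_lt_top_of_lzNorm hq hα hP (half_pos hδ)
  have h2 := volume_lt_top_of_lzNorm hq hα hQ (half_pos hδ)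
  refine absurd htop (ne_of_lt ?_)
  refine lt_of_le_of_lt (measure_mono ?_) ((measure_union_le _ _).trans_lt
    (ENNReal.add_lt_top.2 ⟨h1, h2⟩))
  intro x (hx : δ < _)
  by_contra hcon
  simp only [mem_union, mem_ofPred_eq, not_or, not_lt] at hcon
  rw [map_sub] at hx
  have := abs_sub (u x - MvPolynomial.eval (fun i => x i) P)
    (u x - MvPolynomial.eval (fun i => x i) Q)
  have e : u x - MvPolynomial.eval (fun i => x i) P -
    (u x - MvPolynomial.eval (fun i => x i) Q) = MvPolynomial.eval (fun i => x i) Q -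
      MvPolynomial.eval (fun i => x i) P := by ring
  rw [e] at this
  linarith [hcon.1, hcon.2]

/-! ### Weak derivatives of mollifications and Taylor's formula -/

/-- Derivatives of a convolution fall on the smooth factor. -/
theorem iteratedFDeriv_convolution {n : ℕ} {u φ : Euc n → ℝ} (hu : LocallyIntegrable u volume)
    (hφ : ContDiff ℝ (⊤ : ℕ∞) φ) (hφc : HasCompactSupport φ) (k : ℕ) (v : Fin k → Euc n)
    (x : Euc n) :
    iteratedFDeriv ℝ k (convolution u φ (ContinuousLinearMap.lsmul ℝ ℝ) volume) x v =
      convolution u (fun y => iteratedFDeriv ℝ k φ y v) (ContinuousLinearMap.lsmul ℝ ℝ) volume x := by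
  have hsm : ContDiff ℝ (⊤ : ℕ∞) (convolution u φ (ContinuousLinearMap.lsmul ℝ ℝ) volume) :=
    hφc.contDiff_convolution_right _ hu hφ
  induction k generalizing x with
  | zero => simp
  | succ k ih =>
    have hd : Differentiable ℝ (iteratedFDeriv ℝ k φ) :=
      hφ.differentiable_iteratedFDeriv (by exact_mod_cast WithTop.coe_lt_top _)
    have hd' : Differentiable ℝ (iteratedFDeriv ℝ k
        (convolution u φ (ContinuousLinearMap.lsmul ℝ ℝ) volume)) :=
      hsm.differentiable_iteratedFDeriv (by exact_mod_cast WithTop.coe_lt_top _)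
    rw [(hd' x).iteratedFDeriv_succ_apply_left']
    simp_rw [fun y => (hd y).iteratedFDeriv_succ_apply_left' (m := v), ih]
    set ψ : Euc n → ℝ := fun y => iteratedFDeriv ℝ k φ y (Fin.tail v) with hψ
    have h1 : ContDiff ℝ 1 (iteratedFDeriv ℝ k φ) :=
      hφ.iteratedFDeriv_right (by norm_cast; exact le_top)
    have h2 : ContDiff ℝ 1 ψ := by
      exact (ContinuousMultilinearMap.apply ℝ (fun _ : Fin k => Euc n) ℝ
        (Fin.tail v)).contDiff.comp h1
    have h3 : HasCompactSupport ψ := by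
      refine (hφc.iteratedFDeriv (𝕜 := ℝ) k).mono fun y hy hy0 => hy ?_
      simp [hψ, hy0]
    rw [(h3.hasFDerivAt_convolution_right _ hu h2 x).fderiv,
      convolution_precompR_apply _ hu (h3.fderiv ℝ) (h2.continuous_fderiv one_ne_zero)]

theorem iteratedFDeriv_comp_const_sub {E : Type*} [NormedAddCommGroup E] [NormedSpace ℝ E]
    {φ : E → ℝ} (hφ : ContDiff ℝ (⊤ : ℕ∞) φ) (x : E) (k : ℕ) (v : Fin k → E) (w : E) :
    iteratedFDeriv ℝ k (fun w => φ (x - w)) w v = (-1) ^ k * iteratedFDeriv ℝ k φ (x - w) v := by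
  have hs : ContDiff ℝ (⊤ : ℕ∞) fun w => φ (x - w) := hφ.comp (contDiff_const.sub contDiff_id)
  induction k generalizing w with
  | zero => simp
  | succ k ih =>
    have hd : Differentiable ℝ (iteratedFDeriv ℝ k φ) :=
      hφ.differentiable_iteratedFDeriv (by exact_mod_cast WithTop.coe_lt_top _)
    have hd' : Differentiable ℝ (iteratedFDeriv ℝ k fun w => φ (x - w)) :=
      hs.differentiable_iteratedFDeriv (by exact_mod_cast WithTop.coe_lt_top _)
    rw [(hd' w).iteratedFDeriv_succ_apply_left', (hd (x - w)).iteratedFDeriv_succ_apply_left']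
    simp_rw [ih]
    have h1 : HasFDerivAt (fun y => iteratedFDeriv ℝ k φ y (Fin.tail v))
        (fderiv ℝ (fun y => iteratedFDeriv ℝ k φ y (Fin.tail v)) (x - w)) (x - w) :=
      ((hd (x - w)).continuousMultilinear_apply_const _).hasFDerivAt
    have h2 := (h1.comp w ((hasFDerivAt_id w).const_sub x)).const_mul ((-1 : ℝ) ^ k)
    have h3 := h2.fderiv
    simp only [Function.comp_def, id] at h3
    rw [h3]
    simp [pow_succ]

/-- A mollification has the mollified weak derivatives as its classical derivatives. -/
theorem iteratedFDeriv_convolution_weak {n m : ℕ} {u φ : Euc n → ℝ}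
    {D : ∀ k : ℕ, (Fin k → Fin n) → Euc n → ℝ} (hu : HasWeakDerivs n m u D)
    (hφ : ContDiff ℝ (⊤ : ℕ∞) φ) (hφc : HasCompactSupport φ) (a : Fin m → Fin n) (x : Euc n) :
    iteratedFDeriv ℝ m (convolution u φ (ContinuousLinearMap.lsmul ℝ ℝ) volume) x
        (fun j => EuclideanSpace.single (a j) 1) = ∫ w, D m a w * φ (x - w) := by
  rw [iteratedFDeriv_convolution hu.1 hφ hφc, convolution_lsmul]
  have h1 := hu.2.2.2 m le_rfl a (fun w => φ (x - w)) (hφ.comp (contDiff_const.sub contDiff_id))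
    (hφc.comp_homeomorph (Homeomorph.subLeft x))
  simp_rw [iteratedFDeriv_comp_const_sub hφ, mul_left_comm _ ((-1 : ℝ) ^ m),
    integral_const_mul] at h1
  exact mul_left_cancel₀ (pow_ne_zero _ (by norm_num)) h1

/-- The `m`-th derivative in a direction `h` is bounded by `‖h‖ ^ m` times the `ℓ¹` norm of the `m`-th
order partial derivatives. -/
theorem abs_iteratedFDeriv_le {n m : ℕ} (v : Euc n → ℝ) (z h : Euc n) :
    |iteratedFDeriv ℝ m v z (fun _ => h)| ≤ ‖h‖ ^ m *
      ∑ a : Fin m → Fin n, |iteratedFDeriv ℝ m v z (fun j => EuclideanSpace.single (a j) 1)| := by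
  have hh : (fun _ : Fin m => h) =
      fun _ => ∑ i : Fin n, h i • (EuclideanSpace.single i (1 : ℝ) : Euc n) := by
    ext j i
    simp [Pi.single_apply]
  rw [hh, ContinuousMultilinearMap.map_sum, Finset.mul_sum]
  refine (Finset.abs_sum_le_sum_abs _ _).trans (Finset.sum_le_sum fun a _ => ?_)
  rw [ContinuousMultilinearMap.map_smul_univ, smul_eq_mul, abs_mul, Finset.abs_prod]
  refine mul_le_mul_of_nonneg_right ?_ (abs_nonneg _)
  refine (Finset.prod_le_prod (fun _ _ => abs_nonneg _) (g := fun _ => ‖h‖) fun i _ => ?_).trans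
    (by simp)
  exact PiLp.norm_apply_le h (a i)

/-- Taylor's formula at `y` bounds the remainder by an integral of the derivatives of order `m`
over the segment from `x` to `y`, parametrized by the ratio `r` of the homothety centred at `x`. -/
theorem taylor_remainder_le {n m : ℕ} (hm : 0 < m) {v : Euc n → ℝ} (hv : ContDiff ℝ (⊤ : ℕ∞) v)
    {G : Euc n → ℝ}
    (hG : ∀ z, G z = ∑ a : Fin m → Fin n,
      |iteratedFDeriv ℝ m v z (fun j => EuclideanSpace.single (a j) 1)|) (x y : Euc n) :
    ENNReal.ofReal |v x - ∑ k ∈ Finset.range m,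
        (k.factorial : ℝ)⁻¹ * iteratedFDeriv ℝ k v y (fun _ => x - y)| ≤
      ∫⁻ r in Ioc (0 : ℝ) 1,
        ENNReal.ofReal (r ^ (m - 1) * ‖x - y‖ ^ m) * ENNReal.ofReal (G (x + r • (y - x))) := by
  obtain ⟨l, rfl⟩ : ∃ l, m = l + 1 := ⟨m - 1, by omega⟩
  have h1 := map_add_eq_sum_add_integral_iteratedFDeriv (f := v) (x := y) (y := x - y) (n := l)
    fun t _ => (hv.of_le (by exact_mod_cast le_top)).contDiffAt
  simp only [add_sub_cancel, smul_eq_mul] at h1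
  rw [h1, add_sub_cancel_left]
  have h2 := intervalIntegral.integral_comp_sub_left (a := 0) (b := 1) (fun t : ℝ => (1 - t) ^ l *
    iteratedFDeriv ℝ (l + 1) v (y + t • (x - y)) (fun _ => x - y)) 1
  simp only [sub_sub_cancel, sub_self, sub_zero] at h2
  rw [← h2, intervalIntegral.integral_of_le zero_le_one, abs_mul,
    ENNReal.ofReal_mul (abs_nonneg _)]
  have h3 : ENNReal.ofReal |((l.factorial : ℝ))⁻¹| ≤ 1 := by
    rw [ENNReal.ofReal_le_one, abs_of_nonneg (by positivity)]
    exact inv_le_one_of_one_le₀ (by exact_mod_cast Nat.succ_le_of_lt l.factorial_pos)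
  refine (mul_le_mul_left h3 _).trans ?_
  rw [one_mul, ← Real.enorm_eq_ofReal_abs]
  refine (enorm_integral_le_lintegral_enorm _).trans (setLIntegral_mono' measurableSet_Ioc ?_)
  intro r hr
  have h4 : y + (1 - r) • (x - y) = x + r • (y - x) := by module
  rw [h4, Real.enorm_eq_ofReal_abs, abs_mul, _root_.sub_sub_cancel, abs_of_nonneg (pow_nonneg hr.1.le _),
    ← ENNReal.ofReal_mul (by have := hr.1.le; positivity), mul_assoc]
  refine ENNReal.ofReal_le_ofReal (mul_le_mul_of_nonneg_left ?_ (pow_nonneg hr.1.le _))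
  rw [hG]
  exact abs_iteratedFDeriv_le v _ _

/-! ### Averages of Taylor remainders -/

/-- Change of variables under the homothety `y ↦ x + r (y - x)`. -/
theorem lintegral_homothety {n : ℕ} (x : Euc n) {r : ℝ} (hr : 0 < r) {H : Euc n → ℝ≥0∞}
    (hH : Measurable H) :
    ∫⁻ y, H (x + r • (y - x)) = ENNReal.ofReal (r ^ n)⁻¹ * ∫⁻ z, H z := by
  have h1 : ∫⁻ y, H (x + r • (y - x)) = ∫⁻ y, H (x + r • y) :=
    lintegral_sub_right_eq_self (fun y => H (x + r • y)) x
  have h2 : ∫⁻ w, H (x + w) ∂(Measure.map (r • ·) (volume : Measure (Euc n))) =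
      ∫⁻ y, H (x + r • y) :=
    lintegral_map (hH.comp (measurable_const_add x)) (measurable_const_smul r)
  rw [h1, ← h2, Measure.map_addHaar_smul _ hr.ne', lintegral_smul_measure,
    lintegral_add_left_eq_self H x, finrank_euclideanSpace_fin, abs_of_nonneg (by positivity),
    smul_eq_mul]

theorem lintegral_Ioi_rpow_neg {n : ℕ} (hn : 0 < n) {c : ℝ} (hc : 0 < c) :
    ∫⁻ r in Ioi c, ENNReal.ofReal (r ^ (-(n : ℝ) - 1)) = ENNReal.ofReal ((c ^ n)⁻¹ / n) := by
  have hn' : (0 : ℝ) < n := by exact_mod_cast hn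
  rw [← ofReal_integral_eq_lintegral_ofReal (integrableOn_Ioi_rpow_of_lt (by linarith) hc),
    integral_Ioi_rpow_of_lt (by linarith) hc, sub_add_cancel, Real.rpow_neg hc.le,
    Real.rpow_natCast, neg_div_neg_eq]
  filter_upwards [ae_restrict_mem measurableSet_Ioi] with r hr
  exact Real.rpow_nonneg (hc.trans hr).le _

/-- Averaging the Taylor remainders over a ball produces the Riesz kernel: integrating first over
the ratio `r` of the homothety `y ↦ x + r (y - x)` leaves `‖z - x‖ ^ (m - n)`. -/
theorem lintegral_ball_taylor_le {n m : ℕ} (hn : 0 < n) (hm : 0 < m) {R : ℝ} (hR : 0 < R)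
    {g : Euc n → ℝ≥0∞} (hg : Measurable g) {x : Euc n} (hx : x ∈ Metric.ball (0 : Euc n) R) :
    ∫⁻ y in Metric.ball (0 : Euc n) R, ∫⁻ r in Ioc (0 : ℝ) 1,
        ENNReal.ofReal (r ^ (m - 1) * ‖x - y‖ ^ m) * g (x + r • (y - x)) ≤
      ENNReal.ofReal ((2 * R) ^ n / n) * ∫⁻ z, rieszK n m x z * g z := by
  -- `Φ (r, z)` is the integrand at `z = x + r (y - x)`; its support encodes `‖y - x‖ < 2 * R`.
  set Φ : ℝ × Euc n → ℝ≥0∞ := {p : ℝ × Euc n | ‖p.2 - x‖ < 2 * R * p.1}.indicator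
    fun p => ENNReal.ofReal (p.1 ^ (m - 1) * (‖p.2 - x‖ / p.1) ^ m) * g p.2 with hΦ
  have mΦ : Measurable Φ := by
    refine Measurable.indicator ?_ (measurableSet_lt (by fun_prop) (by fun_prop))
    exact Measurable.mul (by fun_prop) (hg.comp measurable_snd)
  have mψ : Measurable fun p : Euc n × ℝ => ENNReal.ofReal (p.2 ^ (m - 1) * ‖x - p.1‖ ^ m) *
      g (x + p.2 • (p.1 - x)) :=
    Measurable.mul (by fun_prop) (hg.comp (by fun_prop))
  calc _ = ∫⁻ r in Ioc (0 : ℝ) 1, ∫⁻ y in Metric.ball (0 : Euc n) R,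
        ENNReal.ofReal (r ^ (m - 1) * ‖x - y‖ ^ m) * g (x + r • (y - x)) :=
      lintegral_lintegral_swap mψ.aemeasurable
    _ ≤ ∫⁻ r in Ioc (0 : ℝ) 1, ∫⁻ z, ENNReal.ofReal (r ^ n)⁻¹ * Φ (r, z) := by
      refine setLIntegral_mono' measurableSet_Ioc fun r hr => ?_
      have mr : Measurable fun z => Φ (r, z) := mΦ.comp (by fun_prop)
      rw [lintegral_const_mul _ mr, ← lintegral_homothety x hr.1 mr]
      refine le_trans (setLIntegral_mono' measurableSet_ball fun y hy => ?_)
        (setLIntegral_le_lintegral _ _)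
      have h1 : ‖y - x‖ < 2 * R := by
        have := norm_sub_le y x
        rw [mem_ball_zero_iff] at hx hy
        linarith
      have h2 : ‖x + r • (y - x) - x‖ = r * ‖y - x‖ := by
        rw [add_sub_cancel_left, norm_smul, Real.norm_of_nonneg hr.1.le]
      rw [hΦ, indicator_of_mem]
      · dsimp only
        rw [h2, mul_div_cancel_left₀ _ hr.1.ne', norm_sub_rev]
      · change ‖x + r • (y - x) - x‖ < 2 * R * r
        rw [h2]
        nlinarith [hr.1]
    _ = ∫⁻ z, ∫⁻ r in Ioc (0 : ℝ) 1, ENNReal.ofReal (r ^ n)⁻¹ * Φ (r, z) :=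
      lintegral_lintegral_swap (Measurable.aemeasurable
        (Measurable.mul (by fun_prop) mΦ))
    _ ≤ ∫⁻ z, ENNReal.ofReal ((2 * R) ^ n / n) * (rieszK n m x z * g z) := by
      refine lintegral_mono fun z => ?_
      rcases eq_or_ne z x with rfl | hzx
      · simp [hΦ, indicator, hm.ne']
      have hd : 0 < ‖z - x‖ := norm_pos_iff.2 (sub_ne_zero.2 hzx)
      set c := ‖z - x‖ / (2 * R) with hc
      have hc0 : 0 < c := div_pos hd (by positivity)
      calc _ ≤ ∫⁻ r in Ioi (0 : ℝ), ENNReal.ofReal (r ^ n)⁻¹ * Φ (r, z) :=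
            lintegral_mono_set Ioc_subset_Ioi_self
        _ ≤ ∫⁻ r in Ioi (0 : ℝ), (Ioi c).indicator (fun r => ENNReal.ofReal (r ^ (-(n : ℝ) - 1)) *
            (ENNReal.ofReal (‖z - x‖ ^ m) * g z)) r := by
          refine setLIntegral_mono' measurableSet_Ioi fun r (hr : 0 < r) => ?_
          by_cases hrc : c < r
          · rw [indicator_of_mem (show r ∈ Ioi c from hrc)]
            refine (mul_le_mul_right (indicator_le_self' (fun _ _ => zero_le) _) _).trans
              (le_of_eq ?_)
            dsimp only
            rw [← mul_assoc, ← mul_assoc, ← ENNReal.ofReal_mul (by positivity),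
              ← ENNReal.ofReal_mul (by positivity)]
            congr 2
            obtain ⟨l, rfl⟩ : ∃ l, m = l + 1 := ⟨m - 1, by omega⟩
            rw [Real.rpow_sub hr, Real.rpow_neg hr.le, Real.rpow_natCast, Real.rpow_one,
              div_pow, Nat.add_sub_cancel]
            field_simp
            exact (pow_succ _ _).symm
          · rw [hΦ, indicator_of_notMem, mul_zero]
            · exact zero_le
            · change ¬ (‖z - x‖ < 2 * R * r)
              rw [hc, div_lt_iff₀ (by positivity)] at hrc
              rwa [mul_comm]
        _ = ENNReal.ofReal ((c ^ n)⁻¹ / n) * (ENNReal.ofReal (‖z - x‖ ^ m) * g z) := by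
          rw [setLIntegral_indicator measurableSet_Ioi,
            inter_eq_left.2 (Ioi_subset_Ioi hc0.le), lintegral_mul_const _ (by fun_prop),
            lintegral_Ioi_rpow_neg hn hc0]
        _ = _ := by
          rw [rieszK, ← mul_assoc, ← mul_assoc, ← ENNReal.ofReal_mul (by positivity),
            ← ENNReal.ofReal_mul (by positivity), norm_sub_rev x z, Real.rpow_sub hd,
            Real.rpow_natCast, Real.rpow_natCast, hc]
          congr 2
          field_simp
          rw [← mul_pow, div_mul_cancel₀ _ (by positivity)]
    _ = _ := lintegral_const_mul _ ((show Measurable fun z => rieszK n m x z by unfold rieszK; fun_prop).mul hg)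

/-! ### Averaged Taylor polynomials -/

/-- A family of polynomials whose coefficients depend continuously on the parameter. -/
def CoeffCont {n : ℕ} (P : Euc n → MvPolynomial (Fin n) ℝ) : Prop :=
  ∀ e, Continuous fun y => MvPolynomial.coeff e (P y)

namespace CoeffCont

variable {n : ℕ} {P Q : Euc n → MvPolynomial (Fin n) ℝ}

theorem const (p : MvPolynomial (Fin n) ℝ) : CoeffCont fun _ => p := fun _ => continuous_const

theorem ofC {c : Euc n → ℝ} (hc : Continuous c) : CoeffCont fun y => MvPolynomial.C (c y) := by
  classical
  intro e
  simp only [MvPolynomial.coeff_C]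
  split_ifs
  · exact hc
  · exact continuous_const

theorem sub (hP : CoeffCont P) (hQ : CoeffCont Q) : CoeffCont fun y => P y - Q y := fun e => by
  simp only [MvPolynomial.coeff_sub]
  exact (hP e).sub (hQ e)

theorem mul (hP : CoeffCont P) (hQ : CoeffCont Q) : CoeffCont fun y => P y * Q y := by
  classical
  intro e
  simp only [MvPolynomial.coeff_mul]
  exact continuous_finsetSum _ fun i _ => (hP _).mul (hQ _)

theorem sum {ι : Type*} (s : Finset ι) {P : ι → Euc n → MvPolynomial (Fin n) ℝ}
    (hP : ∀ i, CoeffCont (P i)) : CoeffCont fun y => ∑ i ∈ s, P i y := fun e => by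
  simp only [MvPolynomial.coeff_sum]
  exact continuous_finsetSum _ fun i _ => hP i e

theorem prod {ι : Type*} (s : Finset ι) {P : ι → Euc n → MvPolynomial (Fin n) ℝ}
    (hP : ∀ i, CoeffCont (P i)) : CoeffCont fun y => ∏ i ∈ s, P i y := by
  classical
  induction s using Finset.induction_on with
  | empty => simpa using const 1
  | insert i s hi ih =>
    simp only [Finset.prod_insert hi]
    exact (hP i).mul ih

end CoeffCont

theorem eval_eq_sum_degree_le {n d : ℕ} {p : MvPolynomial (Fin n) ℝ} (hd : p.totalDegree ≤ d)
    (x : Fin n → ℝ) :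
    MvPolynomial.eval x p = ∑ e ∈ (Finsupp.finite_of_degree_le (σ := Fin n) d).toFinset,
      MvPolynomial.coeff e p * ∏ i, x i ^ e i := by
  rw [MvPolynomial.eval_eq']
  refine Finset.sum_subset (fun e he => ?_) fun e _ he => ?_
  · have : Finsupp.degree e ≤ d := (MvPolynomial.le_totalDegree he).trans hd
    simpa using this
  · rw [MvPolynomial.notMem_support_iff.1 he, zero_mul]

theorem CoeffCont.continuous_eval {n d : ℕ} {P : Euc n → MvPolynomial (Fin n) ℝ}
    (hP : CoeffCont P) (hd : ∀ y, (P y).totalDegree ≤ d) (x : Fin n → ℝ) :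
    Continuous fun y => MvPolynomial.eval x (P y) := by
  simp_rw [fun y => eval_eq_sum_degree_le (hd y) x]
  exact continuous_finsetSum _ fun e _ => (hP e).mul continuous_const

/-- The mean over a ball of a continuous family of polynomials is a polynomial. -/
theorem exists_average_polynomial {n d : ℕ} {P : Euc n → MvPolynomial (Fin n) ℝ}
    (hP : CoeffCont P) (hd : ∀ y, (P y).totalDegree ≤ d) (R : ℝ) :
    ∃ Q : MvPolynomial (Fin n) ℝ, Q.totalDegree ≤ d ∧ ∀ x : Fin n → ℝ,
      MvPolynomial.eval x Q = ⨍ y in Metric.ball (0 : Euc n) R, MvPolynomial.eval x (P y) := by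
  classical
  set S := (Finsupp.finite_of_degree_le (σ := Fin n) d).toFinset with hS
  refine ⟨∑ e ∈ S, MvPolynomial.monomial e
    (⨍ y in Metric.ball (0 : Euc n) R, MvPolynomial.coeff e (P y)), ?_, fun x => ?_⟩
  · refine (MvPolynomial.totalDegree_finsetSum _ _).trans (Finset.sup_le fun e he => ?_)
    refine (MvPolynomial.totalDegree_monomial_le _ _).trans ?_
    have : Finsupp.degree e ≤ d := by simpa [hS] using he
    exact this
  · simp_rw [fun y => eval_eq_sum_degree_le (hd y) x, ← hS, setAverage_eq]
    rw [integral_finsetSum, Finset.smul_sum, map_sum]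
    · refine Finset.sum_congr rfl fun e _ => ?_
      rw [MvPolynomial.eval_monomial, integral_mul_const, smul_eq_mul, smul_eq_mul, mul_assoc,
        Finsupp.prod_fintype _ _ (by simp)]
    · intro e _
      refine Integrable.mul_const ?_ _
      exact ((hP e).continuousOn.integrableOn_compact (isCompact_closedBall 0 R)).mono_set
        Metric.ball_subset_closedBall

/-- The Taylor polynomial of order `m` at `y`, as a polynomial depending continuously on `y`. -/
theorem exists_taylor_polynomial {n m : ℕ} {v : Euc n → ℝ} (hv : ContDiff ℝ (⊤ : ℕ∞) v) :
    ∃ P : Euc n → MvPolynomial (Fin n) ℝ, CoeffCont P ∧ (∀ y, (P y).totalDegree ≤ m - 1) ∧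
      ∀ x y : Euc n, MvPolynomial.eval (fun i => x i) (P y) =
        ∑ k ∈ Finset.range m, (k.factorial : ℝ)⁻¹ * iteratedFDeriv ℝ k v y (fun _ => x - y) := by
  refine ⟨fun y => ∑ k ∈ Finset.range m, ∑ a : Fin k → Fin n,
    MvPolynomial.C ((k.factorial : ℝ)⁻¹ *
      iteratedFDeriv ℝ k v y (fun j => EuclideanSpace.single (a j) 1)) *
    ∏ j, (MvPolynomial.X (a j) - MvPolynomial.C (y (a j))), ?_, fun y => ?_, fun x y => ?_⟩
  · refine CoeffCont.sum _ fun k => CoeffCont.sum _ fun a => CoeffCont.mul ?_ ?_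
    · refine CoeffCont.ofC (continuous_const.mul ?_)
      have : Continuous (iteratedFDeriv ℝ k v) :=
        hv.continuous_iteratedFDeriv (by exact_mod_cast le_top)
      exact (ContinuousMultilinearMap.apply ℝ (fun _ : Fin k => Euc n) ℝ _).continuous.comp this
    · exact CoeffCont.prod _ fun j => (CoeffCont.const _).sub (CoeffCont.ofC (by fun_prop))
  · refine (MvPolynomial.totalDegree_finsetSum _ _).trans (Finset.sup_le fun k hk => ?_)
    refine (MvPolynomial.totalDegree_finsetSum _ _).trans (Finset.sup_le fun a _ => ?_)
    refine (MvPolynomial.totalDegree_mul _ _).trans ?_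
    rw [MvPolynomial.totalDegree_C, zero_add]
    refine (MvPolynomial.totalDegree_finsetProd _ _).trans ?_
    refine (Finset.sum_le_sum (g := fun _ => 1) fun j _ => ?_).trans ?_
    · exact (MvPolynomial.totalDegree_sub _ _).trans (by simp)
    · have := Finset.mem_range.1 hk
      simp
      omega
  · rw [map_sum]
    refine Finset.sum_congr rfl fun k _ => ?_
    have hh : (fun _ : Fin k => x - y) =
        fun _ => ∑ i : Fin n, (x - y) i • (EuclideanSpace.single i (1 : ℝ) : Euc n) := by
      ext j i
      simp [Pi.single_apply]
    rw [hh, ContinuousMultilinearMap.map_sum, Finset.mul_sum, map_sum]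
    refine Finset.sum_congr rfl fun a _ => ?_
    rw [ContinuousMultilinearMap.map_smul_univ, map_mul, MvPolynomial.eval_C, map_prod, smul_eq_mul,
      mul_assoc, mul_comm (∏ i, (x - y) (a i))]
    simp

/-- A smooth function differs on a ball from some polynomial of degree less than `m` by at most a
constant multiple, independent of the ball, of the Riesz potential of its `m`-th gradient. -/
theorem exists_polynomial_ball {n m : ℕ} (hn : 0 < n) (hm : 0 < m) {v : Euc n → ℝ}
    (hv : ContDiff ℝ (⊤ : ℕ∞) v) {G : Euc n → ℝ}
    (hG : ∀ z, G z = ∑ a : Fin m → Fin n,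
      |iteratedFDeriv ℝ m v z (fun j => EuclideanSpace.single (a j) 1)|) {R : ℝ} (hR : 0 < R) :
    ∃ Q : MvPolynomial (Fin n) ℝ, Q.totalDegree ≤ m - 1 ∧ ∀ x ∈ Metric.ball (0 : Euc n) R,
      ENNReal.ofReal |v x - MvPolynomial.eval (fun i => x i) Q| ≤
        ENNReal.ofReal (2 ^ n / (n * (volume (Metric.ball (0 : Euc n) 1)).toReal)) *
          ∫⁻ z, rieszK n m x z * ENNReal.ofReal (G z) := by
  obtain ⟨P, hPc, hPd, hPe⟩ := exists_taylor_polynomial (m := m) hv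
  obtain ⟨Q, hQd, hQe⟩ := exists_average_polynomial hPc hPd R
  have mG : Measurable G := by
    have : Continuous (iteratedFDeriv ℝ m v) :=
      hv.continuous_iteratedFDeriv (by exact_mod_cast le_top)
    have hG' : Continuous G := by
      rw [funext hG]
      exact continuous_finsetSum _ fun a _ => ((ContinuousMultilinearMap.apply ℝ
        (fun _ : Fin m => Euc n) ℝ _).continuous.comp this).abs
    exact hG'.measurable
  refine ⟨Q, hQd, fun x hx => ?_⟩
  set B := Metric.ball (0 : Euc n) R with hB
  set ω := (volume (Metric.ball (0 : Euc n) 1)).toReal with hω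
  have hω0 : 0 < ω := ENNReal.toReal_pos (Metric.measure_ball_pos _ _ one_pos).ne'
    measure_ball_lt_top.ne
  have hBv : volume.real B = R ^ n * ω := by
    rw [hB, hω, Measure.real, Measure.addHaar_ball_of_pos _ _ hR, finrank_euclideanSpace_fin,
      ENNReal.toReal_mul, ENNReal.toReal_ofReal (by positivity)]
  have hB0 : 0 < volume.real B := by rw [hBv]; positivity
  have hint : IntegrableOn (fun y => MvPolynomial.eval (fun i => x i) (P y)) B :=
    ((hPc.continuous_eval hPd _).continuousOn.integrableOn_compact (isCompact_closedBall 0 R)).mono_set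
      Metric.ball_subset_closedBall
  -- `Q` is the mean of the Taylor polynomials, so the error is the mean of the Taylor remainders.
  have h1 : v x - MvPolynomial.eval (fun i => x i) Q =
      (volume.real B)⁻¹ * ∫ y in B, (v x - MvPolynomial.eval (fun i => x i) (P y)) := by
    rw [hQe, setAverage_eq, integral_sub _ hint, setIntegral_const, smul_eq_mul, smul_eq_mul,
      mul_sub, inv_mul_cancel_left₀ hB0.ne']
    exact integrableOn_const measure_ball_lt_top.ne
  rw [h1, abs_mul, abs_of_nonneg (by positivity), ENNReal.ofReal_mul (by positivity),
    ← Real.enorm_eq_ofReal_abs]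
  calc _ ≤ ENNReal.ofReal (volume.real B)⁻¹ *
        (ENNReal.ofReal ((2 * R) ^ n / n) * ∫⁻ z, rieszK n m x z * ENNReal.ofReal (G z)) := by
        refine mul_le_mul_right ((enorm_integral_le_lintegral_enorm _).trans
          (le_trans (lintegral_mono fun y => ?_)
            (lintegral_ball_taylor_le hn hm hR mG.ennreal_ofReal hx))) _
        rw [Real.enorm_eq_ofReal_abs, hPe]
        exact taylor_remainder_le hm hv hG x y
    _ = _ := by
      rw [← mul_assoc, ← ENNReal.ofReal_mul (by positivity), hBv]
      congr 2
      field_simp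
      ring

/-! ### The pointwise bound by a Riesz potential -/

/-- Pointwise bounded polynomials of bounded degree converge along an ultrafilter to a polynomial
of the same degree, because finite-dimensional spaces of functions are closed. -/
theorem exists_polynomial_limit {n d : ℕ} {Q : ℕ → MvPolynomial (Fin n) ℝ}
    (hQ : ∀ k, (Q k).totalDegree ≤ d) (𝒰 : Ultrafilter ℕ) (X : Set (Euc n))
    (hX : ∀ x ∈ X, ∃ M : ℝ, ∀ᶠ k in (𝒰 : Filter ℕ), |MvPolynomial.eval (fun i => x i) (Q k)| ≤ M) :
    ∃ P : MvPolynomial (Fin n) ℝ, P.totalDegree ≤ d ∧ ∀ x ∈ X,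
      Tendsto (fun k => MvPolynomial.eval (fun i => x i) (Q k)) 𝒰
        (nhds (MvPolynomial.eval (fun i => x i) P)) := by
  let L : MvPolynomial.restrictTotalDegree (Fin n) ℝ d →ₗ[ℝ] (X → ℝ) := LinearMap.pi fun x =>
    (MvPolynomial.aeval fun i => (x : Euc n) i).toLinearMap.comp (Submodule.subtype _)
  have hL : ∀ p x, L p x = MvPolynomial.eval (fun i => (x : Euc n) i) (p : MvPolynomial (Fin n) ℝ) :=
    fun p x => by simp [L, MvPolynomial.aeval_eq_eval]
  have hlim : ∀ x : X, ∃ l : ℝ,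
      Tendsto (fun k => MvPolynomial.eval (fun i => (x : Euc n) i) (Q k)) 𝒰 (nhds l) := by
    intro x
    obtain ⟨M, hM⟩ := hX x x.2
    obtain ⟨l, -, hl⟩ := (isCompact_Icc (a := -M) (b := M)).ultrafilter_le_nhds
      (𝒰.map fun k => MvPolynomial.eval (fun i => (x : Euc n) i) (Q k))
      (le_principal_iff.2 (hM.mono fun k hk => abs_le.1 hk))
    exact ⟨l, hl⟩
  choose ℓ hℓ using hlim
  have hcl : IsClosed (LinearMap.range L : Set (X → ℝ)) := Submodule.closed_of_finiteDimensional _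
  have hmem : ℓ ∈ (LinearMap.range L : Set (X → ℝ)) := by
    refine hcl.mem_of_tendsto (f := fun k => L ⟨Q k,
      (MvPolynomial.mem_restrictTotalDegree _ _ _).2 (hQ k)⟩) (b := (𝒰 : Filter ℕ)) ?_
      (Eventually.of_forall fun k => ⟨_, rfl⟩)
    rw [tendsto_pi_nhds]
    intro x
    simp only [hL]
    exact hℓ x
  obtain ⟨P, hP⟩ := hmem
  refine ⟨P, (MvPolynomial.mem_restrictTotalDegree _ _ _).1 P.2, fun x hx => ?_⟩
  have h1 := hℓ ⟨x, hx⟩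
  rw [← hP, hL] at h1
  exact h1

/-- The Riesz potential of a mollified function is the mollified Riesz potential. -/
theorem lintegral_rieszK_convolution {n m : ℕ} {η F : Euc n → ℝ} (hη : Measurable η)
    (hF : Measurable F) (x : Euc n) :
    ∫⁻ z, rieszK n m x z * ∫⁻ w, ENNReal.ofReal (η (z - w)) * ENNReal.ofReal (F w) =
      ∫⁻ w, ENNReal.ofReal (η (x - w)) * rieszP n m F w := by
  have mK : ∀ x, Measurable fun z => rieszK n m x z := fun x => by unfold rieszK; fun_prop
  have h1 : ∀ z, ∫⁻ w, ENNReal.ofReal (η (z - w)) * ENNReal.ofReal (F w) =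
      ∫⁻ h, ENNReal.ofReal (η h) * ENNReal.ofReal (F (z - h)) := by
    intro z
    rw [← lintegral_sub_left_eq_self _ z]
    simp only [_root_.sub_sub_cancel]
  have h2 : ∫⁻ w, ENNReal.ofReal (η (x - w)) * rieszP n m F w =
      ∫⁻ h, ENNReal.ofReal (η h) * rieszP n m F (x - h) := by
    rw [← lintegral_sub_left_eq_self _ x]
    simp only [_root_.sub_sub_cancel]
  have h3 : ∀ h, rieszP n m F (x - h) = ∫⁻ z, rieszK n m x z * ENNReal.ofReal (F (z - h)) := by
    intro h
    rw [rieszP, ← lintegral_sub_right_eq_self _ h]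
    simp only [rieszK, sub_sub_sub_cancel_right]
  simp_rw [h1, h2, h3]
  have e1 : ∀ z, rieszK n m x z * ∫⁻ h, ENNReal.ofReal (η h) * ENNReal.ofReal (F (z - h)) =
      ∫⁻ h, rieszK n m x z * (ENNReal.ofReal (η h) * ENNReal.ofReal (F (z - h))) := fun z =>
    (lintegral_const_mul _ (by fun_prop)).symm
  have e2 : ∀ h, ENNReal.ofReal (η h) * ∫⁻ z, rieszK n m x z * ENNReal.ofReal (F (z - h)) =
      ∫⁻ z, ENNReal.ofReal (η h) * (rieszK n m x z * ENNReal.ofReal (F (z - h))) := fun h =>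
    (lintegral_const_mul _ ((mK x).mul (by fun_prop))).symm
  simp_rw [e1, e2]
  rw [lintegral_lintegral_swap]
  · simp_rw [mul_left_comm]
  · refine Measurable.aemeasurable (Measurable.mul ((mK x).comp measurable_fst) ?_)
    fun_prop

/-- The gradient of a mollification is bounded by the mollified length of the weak gradient. -/
theorem ofReal_gradient_convolution_le {n m : ℕ} {η F : Euc n → ℝ}
    {D : ∀ k : ℕ, (Fin k → Fin n) → Euc n → ℝ}
    (hD : ∀ a : Fin m → Fin n, AEStronglyMeasurable (D m a) volume)
    (hη : Measurable η) (hη0 : ∀ x, 0 ≤ η x)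
    (hF : F =ᵐ[volume] gradAbs n m D) (z : Euc n) :
    ENNReal.ofReal (∑ a : Fin m → Fin n, |∫ w, D m a w * η (z - w)|) ≤
      ∫⁻ w, ENNReal.ofReal (η (z - w)) * ENNReal.ofReal (F w) := by
  rw [ENNReal.ofReal_sum_of_nonneg fun _ _ => abs_nonneg _]
  calc _ ≤ ∑ a : Fin m → Fin n, ∫⁻ w, ENNReal.ofReal |D m a w| * ENNReal.ofReal (η (z - w)) := by
        refine Finset.sum_le_sum fun a _ => ?_
        rw [← Real.enorm_eq_ofReal_abs]
        refine (enorm_integral_le_lintegral_enorm _).trans (lintegral_mono fun w => ?_)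
        rw [Real.enorm_eq_ofReal_abs, abs_mul, ENNReal.ofReal_mul (abs_nonneg _),
          abs_of_nonneg (hη0 _)]
    _ = ∫⁻ w, ∑ a : Fin m → Fin n, ENNReal.ofReal |D m a w| * ENNReal.ofReal (η (z - w)) := by
        rw [lintegral_finsetSum']
        intro a _
        refine AEMeasurable.mul ?_
          (hη.comp (measurable_const.sub measurable_id)).ennreal_ofReal.aemeasurable
        exact (continuous_abs.comp_aestronglyMeasurable (hD a)).aemeasurable.ennreal_ofReal
    _ = _ := by
        refine lintegral_congr_ae ?_
        filter_upwards [hF] with w hw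
        rw [hw, gradAbs, ENNReal.ofReal_sum_of_nonneg fun _ _ => abs_nonneg _, ← Finset.sum_mul,
          mul_comm]

/-- Up to a polynomial of degree less than `m`, a function is bounded by the Riesz potential of the
absolute value of its `m`-th weak gradient. -/
theorem exists_polynomial_le_rieszP {n m : ℕ} (hn : 0 < n) (hm : 0 < m) :
    ∃ C : ℝ, 0 < C ∧ ∀ (u : Euc n → ℝ) (D : ∀ k : ℕ, (Fin k → Fin n) → Euc n → ℝ),
      HasWeakDerivs n m u D → ∀ F : Euc n → ℝ, Measurable F → F =ᵐ[volume] gradAbs n m D →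
      (∀ R, 0 < R → ∫⁻ x in Metric.ball 0 R, rieszP n m F x < ⊤) →
      ∃ P : MvPolynomial (Fin n) ℝ, P.totalDegree ≤ m - 1 ∧ ∀ᵐ x : Euc n,
        ENNReal.ofReal |u x - MvPolynomial.eval (fun i => x i) P| ≤
          ENNReal.ofReal C * rieszP n m F x := by
  set C : ℝ := 2 ^ n / (n * (volume (Metric.ball (0 : Euc n) 1)).toReal) with hC
  have hω0 : 0 < (volume (Metric.ball (0 : Euc n) 1)).toReal :=
    ENNReal.toReal_pos (Metric.measure_ball_pos _ _ one_pos).ne' measure_ball_lt_top.ne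
  have hC0 : 0 < C := by
    have : (0 : ℝ) < n := by exact_mod_cast hn
    exact div_pos (by positivity) (by positivity)
  refine ⟨C, hC0, fun u D hu F mF hF hfin => ?_⟩
  have mP : Measurable (rieszP n m F) := measurable_rieszP n m mF
  set p : Euc n → ℝ := fun x => (rieszP n m F x).toReal with hp
  have hfin' : ∀ R : ℝ, 0 < R → ∀ᵐ x ∂(volume.restrict (Metric.ball (0 : Euc n) R)),
      rieszP n m F x < ⊤ := fun R hR => ae_lt_top mP (hfin R hR).ne
  have hae : ∀ᵐ x : Euc n, rieszP n m F x < ⊤ := by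
    have h1 : ∀ᵐ x : Euc n, ∀ k : ℕ, x ∈ Metric.ball (0 : Euc n) (k + 1) → rieszP n m F x < ⊤ :=
      ae_all_iff.2 fun k => (ae_restrict_iff' measurableSet_ball).1 (hfin' _ (by positivity))
    filter_upwards [h1] with x hx
    obtain ⟨k, hk⟩ := exists_nat_gt ‖x‖
    exact hx k (by rw [mem_ball_zero_iff]; linarith)
  have hploc : LocallyIntegrable p volume := by
    refine fun x => ⟨Metric.ball 0 (‖x‖ + 1), Metric.isOpen_ball.mem_nhds (by simp), ?_⟩
    exact integrable_toReal_of_lintegral_ne_top mP.aemeasurable (hfin _ (by positivity)).ne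
  -- Mollifiers shrinking to the origin with comparable radii, as differentiation of integrals needs.
  let φ : ℕ → ContDiffBump (0 : Euc n) := fun k =>
    ⟨1 / ((k : ℝ) + 1) / 2, 1 / ((k : ℝ) + 1), by positivity, half_lt_self (by positivity)⟩
  have hφ : Tendsto (fun k => (φ k).rOut) atTop (nhds 0) := tendsto_one_div_add_atTop_nhds_zero_nat
  have hφ2 : ∀ᶠ k in atTop, (φ k).rOut ≤ 2 * (φ k).rIn :=
    Eventually.of_forall fun k => by simp only [φ]; linarith
  set η : ℕ → Euc n → ℝ := fun k => (φ k).normed volume with hη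
  have cη : ∀ k, Continuous (η k) := fun k => (φ k).continuous_normed
  have hball : ∀ k : ℕ, ∃ Q : MvPolynomial (Fin n) ℝ, Q.totalDegree ≤ m - 1 ∧
      ∀ x ∈ Metric.ball (0 : Euc n) (k + 1),
      ENNReal.ofReal |convolution (η k) u (ContinuousLinearMap.lsmul ℝ ℝ) volume x -
        MvPolynomial.eval (fun i => x i) Q| ≤
        ENNReal.ofReal C * ∫⁻ w, ENNReal.ofReal (η k (x - w)) * rieszP n m F w := by
    intro k
    have hηs : ContDiff ℝ (⊤ : ℕ∞) (η k) := (φ k).contDiff_normed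
    have hηc : HasCompactSupport (η k) := (φ k).hasCompactSupport_normed
    set v := convolution u (η k) (ContinuousLinearMap.lsmul ℝ ℝ) volume with hv
    obtain ⟨Q, hQd, hQ⟩ := exists_polynomial_ball (v := v) hn hm
      (hηc.contDiff_convolution_right _ hu.1 hηs) (fun _ => rfl) (R := (k : ℝ) + 1) (by positivity)
    refine ⟨Q, hQd, fun x hx => ?_⟩
    have e1 : convolution (η k) u (ContinuousLinearMap.lsmul ℝ ℝ) volume x = v x := by
      rw [hv, convolution_lsmul_swap, convolution_lsmul]
      simp only [smul_eq_mul, mul_comm]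
    rw [e1]
    refine (hQ x hx).trans (mul_le_mul_right ?_ _)
    rw [← lintegral_rieszK_convolution (cη k).measurable mF]
    refine lintegral_mono fun z => mul_le_mul_right ?_ _
    simp_rw [hv, iteratedFDeriv_convolution_weak hu hηs hηc]
    exact ofReal_gradient_convolution_le (fun a => (hu.2.2.1 m a le_rfl).aestronglyMeasurable)
      (cη k).measurable (fun x => (φ k).nonneg_normed x) hF z
  choose Q hQd hQ using hball
  have hbound : ∀ k : ℕ, ∀ x ∈ Metric.ball (0 : Euc n) (k + 1),
      |convolution (η k) u (ContinuousLinearMap.lsmul ℝ ℝ) volume x -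
        MvPolynomial.eval (fun i => x i) (Q k)| ≤
        C * convolution (η k) p (ContinuousLinearMap.lsmul ℝ ℝ) volume x := by
    intro k x hx
    have hηn : ∀ y, 0 ≤ η k y := fun y => (φ k).nonneg_normed y
    have e1 : ∫⁻ w, ENNReal.ofReal (η k (x - w)) * rieszP n m F w =
        ENNReal.ofReal (convolution (η k) p (ContinuousLinearMap.lsmul ℝ ℝ) volume x) := by
      rw [convolution_lsmul_swap, ofReal_integral_eq_lintegral_ofReal]
      · refine lintegral_congr_ae ?_
        filter_upwards [hae] with w hw
        rw [smul_eq_mul, ENNReal.ofReal_mul (hηn _), hp, ENNReal.ofReal_toReal hw.ne]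
      · have h1 : ConvolutionExistsAt p (η k) x (ContinuousLinearMap.lsmul ℝ ℝ) volume :=
          (φ k).hasCompactSupport_normed.convolutionExists_right _ hploc (cη k) x
        refine Integrable.congr h1 (Eventually.of_forall fun w => ?_)
        simp [mul_comm]
      · exact Eventually.of_forall fun w => mul_nonneg (hηn _) ENNReal.toReal_nonneg
    have h2 := hQ k x hx
    rw [e1, ← ENNReal.ofReal_mul hC0.le] at h2
    refine (ENNReal.ofReal_le_ofReal_iff (mul_nonneg hC0.le ?_)).1 h2
    rw [convolution_lsmul_swap]
    exact integral_nonneg fun w => mul_nonneg (hηn _) ENNReal.toReal_nonneg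
  have hlu := ContDiffBump.ae_convolution_tendsto_right_of_locallyIntegrable (μ := volume)
    hφ hφ2 hu.1
  have hlp := ContDiffBump.ae_convolution_tendsto_right_of_locallyIntegrable (μ := volume)
    hφ hφ2 hploc
  set X : Set (Euc n) := {x | Tendsto (fun k => convolution (η k) u
      (ContinuousLinearMap.lsmul ℝ ℝ) volume x) atTop (nhds (u x)) ∧
    Tendsto (fun k => convolution (η k) p
      (ContinuousLinearMap.lsmul ℝ ℝ) volume x) atTop (nhds (p x))} with hX
  -- Along an ultrafilter every bounded real sequence converges, so no subsequence has to be chosen.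
  let 𝒰 : Ultrafilter ℕ := Ultrafilter.of atTop
  have h𝒰 : (𝒰 : Filter ℕ) ≤ atTop := Ultrafilter.of_le _
  have hev : ∀ x : Euc n, ∀ᶠ k : ℕ in atTop, x ∈ Metric.ball (0 : Euc n) (k + 1) := by
    intro x
    obtain ⟨N, hN⟩ := exists_nat_gt ‖x‖
    filter_upwards [eventually_ge_atTop N] with k hk
    have : (N : ℝ) ≤ k := by exact_mod_cast hk
    rw [mem_ball_zero_iff]; linarith
  obtain ⟨P, hPd, hP⟩ := exists_polynomial_limit hQd 𝒰 X fun x hx => by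
    refine ⟨(|u x| + 1) + C * (p x + 1), h𝒰 ?_⟩
    filter_upwards [hev x, hx.1.abs.eventually_le_const (lt_add_one _),
      hx.2.eventually_le_const (lt_add_one _)] with k h1 h2 h3
    have h4 := hbound k x h1
    have h5 := mul_le_mul_of_nonneg_left h3 hC0.le
    have h6 := abs_sub_abs_le_abs_sub (MvPolynomial.eval (fun i => x i) (Q k))
      (convolution (η k) u (ContinuousLinearMap.lsmul ℝ ℝ) volume x)
    rw [abs_sub_comm] at h6
    linarith
  refine ⟨P, hPd, ?_⟩
  filter_upwards [hlu, hlp, hae] with x hx1 hx2 hx3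
  have h1 : |u x - MvPolynomial.eval (fun i => x i) P| ≤ C * p x :=
    le_of_tendsto_of_tendsto ((hx1.mono_left h𝒰).sub (hP x ⟨hx1, hx2⟩)).abs
      ((hx2.mono_left h𝒰).const_mul C) (h𝒰 ((hev x).mono fun k hk => hbound k x hk))
  refine (ENNReal.ofReal_le_ofReal h1).trans ?_
  rw [ENNReal.ofReal_mul hC0.le, hp, ENNReal.ofReal_toReal hx3.ne]

/-! ### The Sobolev inequality -/

/-- The Lorentz–Zygmund functional depends only on the almost-everywhere class. -/
theorem lzNorm_congr_ae {α : Type*} [MeasurableSpace α] {μ : Measure α} {f g : α → ℝ}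
    (h : f =ᵐ[μ] g) (pinv : ℝ) (q : ℝ≥0∞) (a0 ai b0 bi : ℝ) :
    lzNorm μ pinv q a0 ai b0 bi f = lzNorm μ pinv q a0 ai b0 bi g := by
  have hr : rearr μ f = rearr μ g := by
    have h1 : (fun x => ENNReal.ofReal |f x|) =ᵐ[μ] fun x => ENNReal.ofReal |g x| := by
      filter_upwards [h] with x hx
      rw [hx]
    funext t
    exact le_antisymm (rearrE_mono h1.le t) (rearrE_mono h1.symm.le t)
  simp only [lzNorm, hr]

/-- Let n ≥ 2, m < n, p = n/m, q ∈ (1,∞], α₀ = 1 − 1/q, α∞ > 1 − 1/q.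
There is C such that every u ∈ V^m L^{p,q;[α₀,α∞]}(ℝⁿ) admits a unique polynomial P of
degree ≤ m−1 with ‖u − P‖_{L^{∞,q;[−1/q, α∞−1],[−1,0]}} ≤ C‖∇^m u‖_{L^{p,q;[α₀,α∞]}}.
(Here `lzNorm μ pinv q a0 ai b0 bi` is the Lorentz–Zygmund norm with 1/p = pinv;
for q = ∞ one has 1/q.toReal = 0 by convention.) -/
theorem stmt_17 (n m : ℕ) (hn : 2 ≤ n) (hm : 0 < m) (hmn : m < n)
    (q : ℝ≥0∞) (hq : 1 < q) (αi : ℝ) (hαi : 1 - 1 / q.toReal < αi) :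
    ∃ C : ℝ, 0 < C ∧
      ∀ (u : Euc n → ℝ) (D : ∀ k : ℕ, (Fin k → Fin n) → Euc n → ℝ),
        HasWeakDerivs n m u D →
        lzNorm volume ((m : ℝ) / n) q (1 - 1 / q.toReal) αi 0 0 (gradAbs n m D) < ⊤ →
        ∃ P : MvPolynomial (Fin n) ℝ, P.totalDegree ≤ m - 1 ∧
          lzNorm volume 0 q (-(1 / q.toReal)) (αi - 1) (-1) 0
              (fun x => u x - MvPolynomial.eval (fun i => x i) P) ≤
            ENNReal.ofReal C *
              lzNorm volume ((m : ℝ) / n) q (1 - 1 / q.toReal) αi 0 0 (gradAbs n m D) ∧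
          ∀ Q : MvPolynomial (Fin n) ℝ, Q.totalDegree ≤ m - 1 →
            lzNorm volume 0 q (-(1 / q.toReal)) (αi - 1) (-1) 0
                (fun x => u x - MvPolynomial.eval (fun i => x i) Q) ≤
              ENNReal.ofReal C *
                lzNorm volume ((m : ℝ) / n) q (1 - 1 / q.toReal) αi 0 0 (gradAbs n m D) →
            Q = P := by
  have hn0 : 0 < n := by omega
  obtain ⟨C₁, hC₁, hlz⟩ := rieszP_lz hm hmn hq hαi
  obtain ⟨C₂, hC₂, hpol⟩ := exists_polynomial_le_rieszP (n := n) (m := m) hn0 hm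
  refine ⟨C₂ * C₁, mul_pos hC₂ hC₁, fun u D hu hfin => ?_⟩
  -- A measurable nonnegative representative of the gradient feeds the potential estimates.
  have hmeas : AEMeasurable (gradAbs n m D) volume :=
    Finset.aemeasurable_fun_sum _ fun a _ =>
      (hu.2.2.1 m a le_rfl).aestronglyMeasurable.aemeasurable.norm
  set F : Euc n → ℝ := fun x => |hmeas.mk _ x| with hF
  have hFmeas : Measurable F := hmeas.measurable_mk.norm
  have hFae : F =ᵐ[volume] gradAbs n m D := by
    filter_upwards [hmeas.ae_eq_mk] with x hx
    rw [hF]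
    beta_reduce
    rw [← hx, abs_of_nonneg (Finset.sum_nonneg fun a _ => abs_nonneg _)]
  have hFn := lzNorm_congr_ae hFae ((m : ℝ) / n) q (1 - 1 / q.toReal) αi 0 0
  obtain ⟨hloc, hest⟩ := hlz F hFmeas (fun x => abs_nonneg _) (hFn ▸ hfin)
  obtain ⟨P, hPdeg, hP⟩ := hpol u D hu F hFmeas hFae hloc
  rw [hFn] at hest
  have hle : lzNorm volume 0 q (-(1 / q.toReal)) (αi - 1) (-1) 0
      (fun x : Euc n => u x - MvPolynomial.eval (fun i => x i) P) ≤
      ENNReal.ofReal (C₂ * C₁) *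
        lzNorm volume ((m : ℝ) / n) q (1 - 1 / q.toReal) αi 0 0 (gradAbs n m D) := by
    rw [lzNorm_eq_eLpNorm _ _ hq, ENNReal.ofReal_mul hC₂.le, mul_assoc]
    refine (const_mul_eLpNorm_le hq hC₂ (Eventually.of_forall fun t => ?_)).trans
      (mul_le_mul_right hest _)
    rw [mul_left_comm]
    exact mul_le_mul_right ((rearrE_mono hP t).trans
      (rearrE_const_mul (ENNReal.ofReal_pos.2 hC₂).ne' ENNReal.ofReal_ne_top t)) _
  have htop := ENNReal.mul_lt_top (ENNReal.ofReal_lt_top (r := C₂ * C₁)) hfin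
  exact ⟨P, hPdeg, hle, fun Q _ hQ =>
    polynomial_unique hn0 hq hαi (hle.trans_lt htop) (hQ.trans_lt htop)⟩
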